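/- arXiv:1503.05302 — 3 statements merged into one kernel-verified Lean document; each statement's English description precedes it below -/
import Mathlib

section
/- Let d ≥ 2 and 0 < β < α < 2, and let D ⊂ ℝ^d be a bounded open set. Let G : {(x,y) ∈ D×D : x ≠ y} → [0,∞) be such that x ↦ G(x,y) is twice continuously differentiable on D∖{y} for each y ∈ D, extended by 0 outside D×D, and suppose there are constants c₀, c₂ > 0 such that for all x ≠ y in D and 1 ≤ i,j ≤ d: (a) G(x,y) ≤ c₀ |x−y|^{α−d} min(1, δ_D(x)/|x−y|)^{α/2} min(1, δ_D(y)/|x−y|)^{α/2}; (b) |∂²_{x_i x_j} G(x,y)| ≤ c₂ |x−y|^{α−d−2} min(1, δ_D(y)/|x−y|)^{α/2} max(1, |x−y|/δ_D(x))^{2−α/2}. Let b : ℝ^d × ℝ^d → ℝ be bounded and measurable. For x ≠ y in D set λ := min(δ_D(x), |x−y|)/2 and define |𝒮^b_x|G(x,y) := 𝒜(d,−β)·[ ∫_{|z|≤λ} |G(x+z,y) − G(x,y) − ∇_x G(x,y)·z|·|b(x,z)|·|z|^{−d−β} dz + ∫_{|z|>λ} (G(x+z,y) + G(x,y))·|b(x,z)|·|z|^{−d−β}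 dz ]. Then there exists a constant C = C(d, α, β, c₀, c₂) > 0 such that |𝒮^b_x|G(x,y) ≤ C ‖b‖_∞ h_D(x,y) for all x ≠ y in D. -/
open MeasureTheory Metric Set

noncomputable section

/-- distance to the boundary `∂D` -/
def deltaD {d : ℕ} (D : Set (EuclideanSpace ℝ (Fin d))) (x : EuclideanSpace ℝ (Fin d)) : ℝ :=
  Metric.infDist x (frontier D)

/-- `𝒜(d, -γ)`, the normalizing constant of the fractional Laplacian `Δ^{γ/2}` on `ℝ^d`. -/
def stableConst (d : ℕ) (γ : ℝ) : ℝ :=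
  γ * 2 ^ (γ - 1) * Real.pi ^ (-(d : ℝ) / 2) * Real.Gamma (((d : ℝ) + γ) / 2) *
    (Real.Gamma (1 - γ / 2))⁻¹

/-- the kernel `h_D(x,y)` -/
def hKer {d : ℕ} (α β : ℝ) (D : Set (EuclideanSpace ℝ (Fin d)))
    (x y : EuclideanSpace ℝ (Fin d)) : ℝ :=
  if 2 * β < α then
    ‖x - y‖ ^ (α - β - (d : ℝ)) * min 1 (deltaD D y / ‖x - y‖) ^ (α / 2)
  else if α = 2 * β then
    ‖x - y‖ ^ (β - (d : ℝ)) * min 1 (deltaD D y / ‖x - y‖) ^ β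
      * max 1 (Real.log (‖x - y‖ / deltaD D x))
  else
    ‖x - y‖ ^ (α - β - (d : ℝ)) * min 1 (deltaD D y / ‖x - y‖) ^ (α / 2)
      * max 1 (‖x - y‖ / deltaD D x) ^ (β - α / 2)

/-!
Write `r = ‖x - y‖`, `λ = min (δ_D(x)) r / 2`. On `closedBall x λ` neither `δ_D` nor the distance to
`y` varies by more than a constant factor, so the Hessian bound there is comparable to its value at
`x`. The Taylor remainder is `O(‖z‖ ^ 2)` with that constant, and integrating against
`‖z‖ ^ (-d - β)` leaves a factor `λ ^ (2 - β)`.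

For `λ < ‖z‖` split the jumps into those landing near the pole (`‖x + z - y‖ ≤ r / 2`), the shell
`λ < ‖z‖ ≤ r` and the far field `r < ‖z‖`. The first and the last scale like
`r ^ (α - β - d) * min 1 (δ_D(y) / r) ^ (α / 2)`. On the shell `δ_D(x + z) ≤ 3 * ‖z‖` if
`δ_D(x) ≤ r`, so the decay of the Green function at the boundary gains a factor
`(‖z‖ / r) ^ (α / 2)`, and the three regimes of `h_D` are those of
`∫ t in λ..r, t ^ (α / 2 - β - 1)`.
-/

/-- `f` is integrable on `s`, with integral at most `c`. The integrability conjunct rules out that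
the bound holds only because a divergent Bochner integral is `0`. -/
def HasSetIntegralLE {X : Type*} [MeasurableSpace X] (μ : Measure X) (f : X → ℝ) (s : Set X)
    (c : ℝ) : Prop :=
  IntegrableOn f s μ ∧ ∫ z in s, f z ∂μ ≤ c

namespace HasSetIntegralLE

variable {X : Type*} [MeasurableSpace X] {μ : Measure X} {f g : X → ℝ} {s t : Set X} {a c : ℝ}

lemma trans_le (hf : HasSetIntegralLE μ f s a) (hac : a ≤ c) : HasSetIntegralLE μ f s c :=
  ⟨hf.1, hf.2.trans hac⟩

lemma const_mul (hf : HasSetIntegralLE μ f s a) (hc : 0 ≤ c) :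
    HasSetIntegralLE μ (fun z => c * f z) s (c * a) := by
  refine ⟨hf.1.const_mul c, ?_⟩
  rw [integral_const_mul]
  exact mul_le_mul_of_nonneg_left hf.2 hc

lemma add (hf : HasSetIntegralLE μ f s a) (hg : HasSetIntegralLE μ g s c) :
    HasSetIntegralLE μ (fun z => f z + g z) s (a + c) := by
  refine ⟨hf.1.add hg.1, ?_⟩
  rw [integral_add hf.1 hg.1]
  exact add_le_add hf.2 hg.2

lemma mono_set (hf : HasSetIntegralLE μ f t a) (hf₀ : ∀ z, 0 ≤ f z) (hst : s ⊆ t) :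
    HasSetIntegralLE μ f s a :=
  ⟨hf.1.mono_set hst,
    (setIntegral_mono_set hf.1 (.of_forall hf₀) hst.eventuallyLE).trans hf.2⟩

lemma union (hfs : HasSetIntegralLE μ f s a) (hft : HasSetIntegralLE μ f t c)
    (hf₀ : ∀ z, 0 ≤ f z) : HasSetIntegralLE μ f (s ∪ t) (a + c) := by
  refine ⟨hfs.1.union hft.1, ?_⟩
  calc ∫ z in s ∪ t, f z ∂μ
      ≤ ∫ z, f z ∂(μ.restrict s + μ.restrict t) :=
        integral_mono_measure (Measure.restrict_union_le s t) (.of_forall hf₀)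
          (Integrable.add_measure hfs.1 hft.1)
    _ = (∫ z in s, f z ∂μ) + ∫ z in t, f z ∂μ := integral_add_measure hfs.1 hft.1
    _ ≤ a + c := add_le_add hfs.2 hft.2

lemma comp_add_left [AddGroup X] [MeasurableAdd X] [μ.IsAddLeftInvariant]
    (hf : HasSetIntegralLE μ f s c) (v : X) :
    HasSetIntegralLE μ (fun z => f (v + z)) ((v + ·) ⁻¹' s) c := by
  have hv := measurePreserving_add_left μ v
  have he := measurableEmbedding_addLeft v
  exact ⟨(hv.integrableOn_comp_preimage he).2 hf.1,
    (hv.setIntegral_preimage_emb he f s).trans_le hf.2⟩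

lemma of_le (hg : HasSetIntegralLE μ g s a) (hs : MeasurableSet s)
    (hf : AEStronglyMeasurable f (μ.restrict s))
    (hfg : ∀ᵐ z ∂μ, z ∈ s → 0 ≤ f z ∧ f z ≤ g z) : HasSetIntegralLE μ f s a := by
  have hfg' : ∀ᵐ z ∂μ.restrict s, 0 ≤ f z ∧ f z ≤ g z := (ae_restrict_iff' hs).2 hfg
  have hf_int : IntegrableOn f s μ := hg.1.mono' hf <| hfg'.mono fun z hz => by
    rw [Real.norm_of_nonneg hz.1]
    exact hz.2
  exact ⟨hf_int, (integral_mono_ae hf_int hg.1 (hfg'.mono fun z hz => hz.2)).trans hg.2⟩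

end HasSetIntegralLE

/-- The growth in `M` of `∫ t in r / (2 * M)..r, t ^ (p - 1)`, up to the factor `r ^ p`; it accounts
for the three regimes of `hKer`, with `p = α / 2 - β` and `M = max 1 (‖x - y‖ / δ_D(x))`. -/
def shellProfile (p M : ℝ) : ℝ :=
  if 0 < p then 1 else if p = 0 then max 1 (Real.log M) else M ^ (-p)

lemma one_le_shellProfile (p : ℝ) {M : ℝ} (hM : 1 ≤ M) : 1 ≤ shellProfile p M := by
  unfold shellProfile
  split_ifs with hp
  · exact le_rfl
  · exact le_max_left _ _
  · exact Real.one_le_rpow hM (by linarith)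

lemma rpow_neg_le_shellProfile (p : ℝ) {M : ℝ} (hM : 1 ≤ M) : M ^ (-p) ≤ shellProfile p M := by
  unfold shellProfile
  split_ifs with hp hp₀
  · exact Real.rpow_le_one_of_one_le_of_nonpos hM (by linarith)
  · rw [hp₀, neg_zero, Real.rpow_zero]
    exact le_max_left _ _
  · exact le_rfl

lemma integrableOn_Ioc_rpow (p : ℝ) {a b : ℝ} (ha : 0 < a) :
    IntegrableOn (fun t : ℝ => t ^ p) (Ioc a b) :=
  ((continuousOn_id.rpow_const fun _ ht => .inl (ha.trans_le ht.1).ne').integrableOn_Icc).mono_set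
    Ioc_subset_Icc_self

lemma integral_rpow_sub_one_le_of_pos {p a b : ℝ} (hp : 0 < p) (ha : 0 ≤ a) :
    ∫ t in a..b, t ^ (p - 1) ≤ p⁻¹ * b ^ p := by
  rw [integral_rpow (Or.inl (by linarith)), sub_add_cancel, inv_mul_eq_div]
  gcongr
  exact sub_le_self _ (Real.rpow_nonneg ha p)

lemma integral_rpow_sub_one_le_of_neg {p a b : ℝ} (hp : p < 0) (ha : 0 < a) (hab : a ≤ b) :
    ∫ t in a..b, t ^ (p - 1) ≤ (-p)⁻¹ * a ^ p := by
  have h0 : (0 : ℝ) ∉ uIcc a b := by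
    rw [uIcc_of_le hab]
    exact fun h => ha.not_ge h.1
  rw [integral_rpow (Or.inr ⟨by linarith, h0⟩), sub_add_cancel, ← neg_div_neg_eq, neg_sub,
    inv_mul_eq_div]
  have := Real.rpow_nonneg (ha.le.trans hab) p
  gcongr
  · linarith
  · linarith

lemma exists_integral_rpow_sub_one_le_shellProfile (p : ℝ) :
    ∃ C ≥ 0, ∀ r M : ℝ, 0 < r → 1 ≤ M →
      ∫ t in r / (2 * M)..r, t ^ (p - 1) ≤ C * (r ^ p * shellProfile p M) := by
  have pos_le {r M : ℝ} (hr : 0 < r) (hM : 1 ≤ M) : 0 < r / (2 * M) ∧ r / (2 * M) ≤ r :=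
    ⟨by positivity, div_le_self hr.le (by linarith)⟩
  rcases lt_trichotomy p 0 with hp | rfl | hp
  · refine ⟨(-p)⁻¹ * 2 ^ (-p), ?_, fun r M hr hM => ?_⟩
    · have : 0 < -p := neg_pos.2 hp
      positivity
    · obtain ⟨ha, har⟩ := pos_le hr hM
      refine (integral_rpow_sub_one_le_of_neg hp ha har).trans_eq ?_
      rw [shellProfile, if_neg hp.not_gt, if_neg hp.ne, Real.div_rpow hr.le (by positivity),
        Real.mul_rpow two_pos.le (by positivity), Real.rpow_neg two_pos.le,
        Real.rpow_neg (by positivity)]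
      field_simp
  · refine ⟨2, two_pos.le, fun r M hr hM => ?_⟩
    obtain ⟨ha, -⟩ := pos_le hr hM
    simp only [zero_sub, Real.rpow_neg_one, Real.rpow_zero, one_mul]
    rw [integral_inv_of_pos ha hr, shellProfile, if_neg (lt_irrefl 0), if_pos rfl,
      div_div_cancel₀ hr.ne', Real.log_mul two_ne_zero (by positivity)]
    linarith [Real.log_two_lt_d9, le_max_left 1 (Real.log M), le_max_right 1 (Real.log M)]
  · refine ⟨p⁻¹, by positivity, fun r M hr hM => ?_⟩
    rw [shellProfile, if_pos hp, mul_one]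
    exact integral_rpow_sub_one_le_of_pos hp (pos_le hr hM).1.le

section RadialIntegrals

open Module (finrank)

lemma eqOn_pow_mul_indicator_rpow {n : ℕ} (hn : 0 < n) (S : Set ℝ) (q : ℝ) :
    EqOn (fun t : ℝ => t ^ (n - 1) • S.indicator (fun t => t ^ (q - n)) t)
      (S.indicator fun t => t ^ (q - 1)) (Ioi 0) := by
  intro t ht
  by_cases htS : t ∈ S
  · simp only [indicator_of_mem htS, smul_eq_mul]
    rw [← Real.rpow_natCast, ← Real.rpow_add ht, Nat.cast_sub hn, Nat.cast_one]
    ring_nf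
  · simp only [indicator_of_notMem htS, smul_zero]

variable {E : Type*} [NormedAddCommGroup E] [NormedSpace ℝ E] [FiniteDimensional ℝ E]
  [Nontrivial E] [MeasurableSpace E] [BorelSpace E] (μ : Measure E) [μ.IsAddHaarMeasure]

lemma integrableOn_preimage_norm_rpow {S : Set ℝ} (hS : MeasurableSet S) {q : ℝ} :
    IntegrableOn (fun z : E => ‖z‖ ^ (q - finrank ℝ E)) (norm ⁻¹' S) μ ↔
      IntegrableOn (fun t : ℝ => t ^ (q - 1)) (Ioi 0 ∩ S) := by
  have hprofile := eqOn_pow_mul_indicator_rpow (Module.finrank_pos (R := ℝ) (M := E)) S q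
  rw [← integrable_indicator_iff (measurable_norm hS), inter_comm, ← integrableOn_indicator_iff hS,
    ← integrableOn_congr_fun hprofile measurableSet_Ioi]
  exact integrable_fun_norm_addHaar μ (f := S.indicator fun t => t ^ (q - finrank ℝ E))

lemma setIntegral_preimage_norm_rpow {S : Set ℝ} (hS : MeasurableSet S) (q : ℝ) :
    ∫ z : E in norm ⁻¹' S, ‖z‖ ^ (q - finrank ℝ E) ∂μ
      = μ.toSphere.real univ * ∫ t in Ioi 0 ∩ S, t ^ (q - 1) := by
  have hprofile := eqOn_pow_mul_indicator_rpow (Module.finrank_pos (R := ℝ) (M := E)) S q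
  rw [← integral_indicator (measurable_norm hS), μ.toSphere_real_apply_univ,
    ← setIntegral_indicator hS, ← setIntegral_congr_fun measurableSet_Ioi hprofile,
    mul_assoc, ← smul_eq_mul, ← smul_eq_mul, Nat.cast_smul_eq_nsmul]
  exact integral_fun_norm_addHaar μ (S.indicator fun t => t ^ (q - finrank ℝ E))

lemma hasSetIntegralLE_norm_rpow {S : Set ℝ} (hS : MeasurableSet S) {q c : ℝ}
    (h : HasSetIntegralLE volume (fun t : ℝ => t ^ (q - 1)) (Ioi 0 ∩ S) c) :
    HasSetIntegralLE μ (fun z : E => ‖z‖ ^ (q - finrank ℝ E)) (norm ⁻¹' S)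
      (μ.toSphere.real univ * c) := by
  refine ⟨(integrableOn_preimage_norm_rpow μ hS).2 h.1, ?_⟩
  rw [setIntegral_preimage_norm_rpow μ hS]
  exact mul_le_mul_of_nonneg_left h.2 measureReal_nonneg

lemma hasSetIntegralLE_norm_rpow_le {q R : ℝ} (hq : 0 < q) (hR : 0 ≤ R) :
    HasSetIntegralLE μ (fun z : E => ‖z‖ ^ (q - finrank ℝ E)) {z | ‖z‖ ≤ R}
      (μ.toSphere.real univ * (R ^ q / q)) := by
  refine hasSetIntegralLE_norm_rpow μ measurableSet_Iic ?_
  rw [Ioi_inter_Iic]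
  constructor
  · rw [← intervalIntegrable_iff_integrableOn_Ioc_of_le hR]
    exact intervalIntegral.intervalIntegrable_rpow' (by linarith)
  · rw [← intervalIntegral.integral_of_le hR, integral_rpow (Or.inl (by linarith)), sub_add_cancel,
      Real.zero_rpow hq.ne', sub_zero]

lemma hasSetIntegralLE_norm_rpow_gt {q R : ℝ} (hq : 0 < q) (hR : 0 < R) :
    HasSetIntegralLE μ (fun z : E => ‖z‖ ^ (-q - finrank ℝ E)) {z | R < ‖z‖}
      (μ.toSphere.real univ * (R ^ (-q) / q)) := by
  refine hasSetIntegralLE_norm_rpow μ measurableSet_Ioi ?_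
  rw [inter_eq_self_of_subset_right (Ioi_subset_Ioi hR.le)]
  refine ⟨integrableOn_Ioi_rpow_of_lt (by linarith) hR, ?_⟩
  rw [integral_Ioi_rpow_of_lt (by linarith) hR, sub_add_cancel, neg_div_neg_eq]

lemma exists_hasSetIntegralLE_norm_rpow_shell (p : ℝ) :
    ∃ C ≥ 0, ∀ r M : ℝ, 0 < r → 1 ≤ M →
      HasSetIntegralLE μ (fun z : E => ‖z‖ ^ (p - finrank ℝ E)) {z | ‖z‖ ∈ Ioc (r / (2 * M)) r}
        (C * (r ^ p * shellProfile p M)) := by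
  obtain ⟨C, hC, hle⟩ := exists_integral_rpow_sub_one_le_shellProfile p
  refine ⟨μ.toSphere.real univ * C, by positivity, fun r M hr hM => ?_⟩
  have ha : 0 < r / (2 * M) := by positivity
  rw [mul_assoc]
  refine hasSetIntegralLE_norm_rpow μ measurableSet_Ioc ?_
  rw [inter_eq_self_of_subset_right (Ioc_subset_Ioi_self.trans (Ioi_subset_Ioi ha.le))]
  refine ⟨integrableOn_Ioc_rpow _ ha, ?_⟩
  rw [← intervalIntegral.integral_of_le (div_le_self hr.le (by linarith))]
  exact hle r M hr hM

end RadialIntegrals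

lemma min_one_div_le_mul {k t r δ : ℝ} (hk : 1 ≤ k) (hδ : 0 ≤ δ) (ht : 0 < t) (hr : 0 < r)
    (h : r ≤ k * t) : min 1 (δ / t) ≤ k * min 1 (δ / r) := by
  rw [mul_min_of_nonneg _ _ (by linarith), mul_one, mul_div_assoc']
  refine min_le_min hk ((div_le_div_iff₀ ht hr).2 ?_)
  calc δ * r ≤ δ * (k * t) := by gcongr
    _ = k * δ * t := by ring

lemma max_one_div_le_mul {k t r δ ε : ℝ} (hk : 1 ≤ k) (hδ : 0 < δ) (hε : 0 < ε)
    (h : t * δ ≤ k * r * ε) : max 1 (t / ε) ≤ k * max 1 (r / δ) := by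
  rw [mul_max_of_nonneg _ _ (by linarith), mul_one, mul_div_assoc']
  exact max_le_max hk ((div_le_div_iff₀ hε hδ).2 h)

lemma min_one_div_eq_inv_max {r δ : ℝ} (hr : 0 < r) (hδ : 0 < δ) :
    min 1 (δ / r) = (max 1 (r / δ))⁻¹ := by
  rcases le_total δ r with h | h
  · rw [min_eq_right ((div_le_one hr).2 h), max_eq_right ((one_le_div hδ).2 h), inv_div]
  · rw [min_eq_left ((one_le_div hr).2 h), max_eq_left ((div_le_one hδ).2 h), inv_one]

lemma half_min_eq_div_two_mul_max {r δ : ℝ} (hr : 0 < r) (hδ : 0 < δ) :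
    min δ r / 2 = r / (2 * max 1 (r / δ)) := by
  rw [mul_comm, ← div_div, div_eq_mul_inv r, ← min_one_div_eq_inv_max hr hδ,
    mul_min_of_nonneg _ _ hr.le, mul_one, mul_div_cancel₀ _ hr.ne', min_comm]

section Cutoff

variable {E : Type*} [NormedAddCommGroup E] {δ : E → ℝ} {x y w : E}

lemma half_norm_sub_le_of_mem_closedBall (hw : w ∈ closedBall x (min (δ x) ‖x - y‖ / 2)) :
    ‖x - y‖ / 2 ≤ ‖w - y‖ := by
  have h₁ := dist_triangle x w y
  have h₂ := mem_closedBall'.1 hw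
  have h₃ := min_le_right (δ x) ‖x - y‖
  rw [dist_eq_norm x y, dist_eq_norm w y] at h₁
  linarith

lemma norm_sub_le_of_mem_closedBall (hw : w ∈ closedBall x (min (δ x) ‖x - y‖ / 2)) :
    ‖w - y‖ ≤ 3 / 2 * ‖x - y‖ := by
  have h₁ := dist_triangle w x y
  have h₂ := mem_closedBall.1 hw
  have h₃ := min_le_right (δ x) ‖x - y‖
  rw [dist_eq_norm x y, dist_eq_norm w y] at h₁
  linarith

lemma half_le_of_mem_closedBall (hδ : LipschitzWith 1 δ)
    (hw : w ∈ closedBall x (min (δ x) ‖x - y‖ / 2)) : δ x / 2 ≤ δ w := by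
  have h₁ := hδ.dist_le_mul x w
  have h₂ := mem_closedBall'.1 hw
  have h₃ := min_le_left (δ x) ‖x - y‖
  rw [Real.dist_eq, NNReal.coe_one, one_mul] at h₁
  linarith [le_abs_self (δ x - δ w)]

-- If `δ x ≤ ‖x - y‖`, leaving the cutoff ball costs `‖z‖ ≥ δ x / 2`, so `δ (x + z) ≤ 3 * ‖z‖`.
lemma min_one_div_norm_sub_le {z : E} (hδ : LipschitzWith 1 δ) (hxy : x ≠ y)
    (hz : min (δ x) ‖x - y‖ / 2 < ‖z‖) (hwy : ‖x - y‖ / 2 ≤ ‖x + z - y‖) :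
    min 1 (δ (x + z) / ‖x + z - y‖) ≤ 6 * ‖z‖ / ‖x - y‖ := by
  have hr : 0 < ‖x - y‖ := norm_sub_pos_iff.2 hxy
  rcases le_total (δ x) ‖x - y‖ with h | h
  · rw [min_eq_left h] at hz
    have hlip := hδ.dist_le_mul (x + z) x
    rw [Real.dist_eq, dist_eq_norm, add_sub_cancel_left, NNReal.coe_one, one_mul] at hlip
    have hδz : δ (x + z) ≤ 3 * ‖z‖ := by linarith [le_abs_self (δ (x + z) - δ x)]
    refine (min_le_right _ _).trans ((div_le_div_iff₀ (by linarith) hr).2 ?_)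
    nlinarith [norm_nonneg z]
  · rw [min_eq_right h] at hz
    refine (min_le_left _ _).trans ((one_le_div hr).2 ?_)
    linarith

end Cutoff

section Majorants

open Module (finrank)

variable {E : Type*} [NormedAddCommGroup E] [NormedSpace ℝ E]

/-- The right-hand side of the Green function estimate (a), without its constant. The distance to
the boundary enters only as a nonnegative 1-Lipschitz function `δ`. -/
def greenMajorant (α : ℝ) (δ : E → ℝ) (x y : E) : ℝ :=
  ‖x - y‖ ^ (α - finrank ℝ E) * min 1 (δ x / ‖x - y‖) ^ (α / 2) * min 1 (δ y / ‖x - y‖) ^ (α / 2)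

/-- The right-hand side of the second derivative estimate (b), without its constant. -/
def hessianMajorant (α : ℝ) (δ : E → ℝ) (x y : E) : ℝ :=
  ‖x - y‖ ^ (α - finrank ℝ E - 2) * min 1 (δ y / ‖x - y‖) ^ (α / 2)
    * max 1 (‖x - y‖ / δ x) ^ (2 - α / 2)

/-- The kernel `h_D` with its three cases merged into `shellProfile`, for a general boundary
distance `δ`. -/
def mergedKernel (α β : ℝ) (δ : E → ℝ) (x y : E) : ℝ :=
  ‖x - y‖ ^ (α - β - finrank ℝ E) * min 1 (δ y / ‖x - y‖) ^ (α / 2)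
    * shellProfile (α / 2 - β) (max 1 (‖x - y‖ / δ x))

variable {α β : ℝ} {δ : E → ℝ} {x y w : E}

lemma greenMajorant_nonneg (hδ₀ : ∀ x, 0 ≤ δ x) : 0 ≤ greenMajorant α δ x y := by
  have hx := hδ₀ x
  have hy := hδ₀ y
  unfold greenMajorant
  positivity

lemma hessianMajorant_nonneg (hδ₀ : ∀ x, 0 ≤ δ x) : 0 ≤ hessianMajorant α δ x y := by
  have hy := hδ₀ y
  unfold hessianMajorant
  positivity

lemma mergedKernel_nonneg (hδ₀ : ∀ x, 0 ≤ δ x) : 0 ≤ mergedKernel α β δ x y := by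
  have hy := hδ₀ y
  have := one_le_shellProfile (α / 2 - β) (le_max_left 1 (‖x - y‖ / δ x))
  unfold mergedKernel
  positivity

lemma rpow_mul_min_rpow_le_mergedKernel (hδ₀ : ∀ x, 0 ≤ δ x) :
    ‖x - y‖ ^ (α - β - finrank ℝ E) * min 1 (δ y / ‖x - y‖) ^ (α / 2) ≤ mergedKernel α β δ x y := by
  have hy := hδ₀ y
  exact le_mul_of_one_le_right (by positivity) (one_le_shellProfile _ (le_max_left _ _))

-- Applied with `s = 0` to the Green function and with `s = 2` to its Hessian.
lemma rpow_mul_rpow_half_min_le_mergedKernel (s : ℝ) (hδ₀ : ∀ x, 0 ≤ δ x) (hxy : x ≠ y)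
    (hx : 0 < δ x) :
    ‖x - y‖ ^ (α - finrank ℝ E - s) * min 1 (δ y / ‖x - y‖) ^ (α / 2)
        * max 1 (‖x - y‖ / δ x) ^ (s - α / 2) * (min (δ x) ‖x - y‖ / 2) ^ (s - β)
      ≤ 2 ^ (β - s) * mergedKernel α β δ x y := by
  have hr : 0 < ‖x - y‖ := norm_sub_pos_iff.2 hxy
  have hy := hδ₀ y
  rw [half_min_eq_div_two_mul_max hr hx, mergedKernel]
  set r := ‖x - y‖
  set M := max 1 (r / δ x)
  have hM : 1 ≤ M := le_max_left _ _
  have hM₀ : 0 < M := by linarith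
  calc _ = 2 ^ (β - s) * (r ^ (α - β - finrank ℝ E) * min 1 (δ y / r) ^ (α / 2)
        * M ^ (-(α / 2 - β))) := by
        rw [Real.div_rpow hr.le (by positivity), Real.mul_rpow two_pos.le hM₀.le,
          show -(α / 2 - β) = (s - α / 2) - (s - β) by ring, Real.rpow_sub hM₀ (s - α / 2),
          show α - β - finrank ℝ E = (α - finrank ℝ E - s) + (s - β) by ring,
          Real.rpow_add hr (α - finrank ℝ E - s), ← neg_sub s β, Real.rpow_neg two_pos.le]
        ring
    _ ≤ _ := by
        gcongr
        exact rpow_neg_le_shellProfile _ hM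

lemma greenMajorant_mul_rpow_half_min_le (hδ₀ : ∀ x, 0 ≤ δ x) (hxy : x ≠ y) (hx : 0 < δ x) :
    greenMajorant α δ x y * (min (δ x) ‖x - y‖ / 2) ^ (-β) ≤ 2 ^ β * mergedKernel α β δ x y := by
  have h := rpow_mul_rpow_half_min_le_mergedKernel (α := α) (β := β) 0 hδ₀ hxy hx
  rw [sub_zero, zero_sub, zero_sub, sub_zero] at h
  rwa [greenMajorant, min_one_div_eq_inv_max (norm_sub_pos_iff.2 hxy) hx,
    Real.inv_rpow (by positivity), ← Real.rpow_neg (by positivity), mul_right_comm (_ ^ _)]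

lemma hessianMajorant_le_of_mem_closedBall (hα₀ : 0 ≤ α) (hα₄ : α ≤ 4)
    (hαn : α ≤ finrank ℝ E + 2) (hδ : LipschitzWith 1 δ) (hδ₀ : ∀ x, 0 ≤ δ x) (hxy : x ≠ y)
    (hx : 0 < δ x) (hw : w ∈ closedBall x (min (δ x) ‖x - y‖ / 2)) :
    hessianMajorant α δ w y ≤ (1 / 2) ^ (α - finrank ℝ E - 2) * 2 ^ (α / 2) * 3 ^ (2 - α / 2)
      * hessianMajorant α δ x y := by
  have hr : 0 < ‖x - y‖ := norm_sub_pos_iff.2 hxy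
  have hy := hδ₀ y
  have hr_le := half_norm_sub_le_of_mem_closedBall hw
  have hle_r := norm_sub_le_of_mem_closedBall hw
  have hδ_le := half_le_of_mem_closedBall hδ hw
  have ht : 0 < ‖w - y‖ := by linarith
  have hmin : min 1 (δ y / ‖w - y‖) ≤ 2 * min 1 (δ y / ‖x - y‖) :=
    min_one_div_le_mul one_le_two hy ht hr (by linarith)
  have hmax : max 1 (‖w - y‖ / δ w) ≤ 3 * max 1 (‖x - y‖ / δ x) :=
    max_one_div_le_mul (by norm_num) hx (by linarith) (by nlinarith)
  calc hessianMajorant α δ w y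
      ≤ (‖x - y‖ * (1 / 2)) ^ (α - finrank ℝ E - 2) * (2 * min 1 (δ y / ‖x - y‖)) ^ (α / 2)
          * (3 * max 1 (‖x - y‖ / δ x)) ^ (2 - α / 2) := by
        unfold hessianMajorant
        have hexp : 0 ≤ 2 - α / 2 := by linarith
        gcongr ?_ * ?_ ^ _ * ?_ ^ _
        exact Real.rpow_le_rpow_of_nonpos (by positivity) (by linarith) (by linarith)
    _ = _ := by
        rw [hessianMajorant, Real.mul_rpow hr.le (by norm_num),
          Real.mul_rpow two_pos.le (by positivity), Real.mul_rpow three_pos.le (by positivity)]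
        ring

lemma greenMajorant_le_of_norm_sub_le {r : ℝ} (hα₀ : 0 < α) (hδ₀ : ∀ x, 0 ≤ δ x)
    (hr : ‖w - y‖ ≤ r) :
    greenMajorant α δ w y
      ≤ r ^ (α / 2) * min 1 (δ y / r) ^ (α / 2) * ‖w - y‖ ^ (α / 2 - finrank ℝ E) := by
  have hw := hδ₀ w
  have hy := hδ₀ y
  have hα₂ : 0 < α / 2 := by linarith
  have hr₀ : 0 ≤ r := (norm_nonneg _).trans hr
  rcases (norm_nonneg (w - y)).eq_or_lt with ht | ht
  · rw [greenMajorant, ← ht, div_zero, min_eq_right zero_le_one, Real.zero_rpow hα₂.ne', mul_zero,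
      zero_mul]
    positivity
  · have hmin : min 1 (δ y / ‖w - y‖) ≤ r / ‖w - y‖ * min 1 (δ y / r) :=
      min_one_div_le_mul ((one_le_div ht).2 hr) hy ht (ht.trans_le hr)
        (div_mul_cancel₀ r ht.ne').ge
    calc greenMajorant α δ w y
        ≤ ‖w - y‖ ^ (α - finrank ℝ E) * 1 ^ (α / 2)
            * (r / ‖w - y‖ * min 1 (δ y / r)) ^ (α / 2) := by
          unfold greenMajorant
          gcongr
          exact min_le_left _ _
      _ = _ := by
          rw [Real.one_rpow, Real.mul_rpow (by positivity) (by positivity),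
            Real.div_rpow hr₀ ht.le,
            show α - finrank ℝ E = (α / 2 - finrank ℝ E) + α / 2 by ring, Real.rpow_add ht]
          field_simp

lemma greenMajorant_le_of_half_le_norm_sub {r : ℝ} (hα₀ : 0 ≤ α) (hαn : α ≤ finrank ℝ E)
    (hδ₀ : ∀ x, 0 ≤ δ x) (hr : 0 < r) (hwy : r / 2 ≤ ‖w - y‖) :
    greenMajorant α δ w y ≤ (r / 2) ^ (α - finrank ℝ E) * 2 ^ (α / 2)
      * min 1 (δ y / r) ^ (α / 2) * min 1 (δ w / ‖w - y‖) ^ (α / 2) := by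
  have hw := hδ₀ w
  have hy := hδ₀ y
  have hmin : min 1 (δ y / ‖w - y‖) ≤ 2 * min 1 (δ y / r) :=
    min_one_div_le_mul one_le_two hy (by linarith) hr (by linarith)
  calc greenMajorant α δ w y
      ≤ (r / 2) ^ (α - finrank ℝ E) * min 1 (δ w / ‖w - y‖) ^ (α / 2)
          * (2 * min 1 (δ y / r)) ^ (α / 2) := by
        unfold greenMajorant
        gcongr ?_ * _ * ?_ ^ _
        exact Real.rpow_le_rpow_of_nonpos (by positivity) hwy (by linarith)
    _ = _ := by
        rw [Real.mul_rpow two_pos.le (by positivity)]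
        ring

end Majorants

section JumpPart

open Module (finrank)

variable {E : Type*} [NormedAddCommGroup E] [NormedSpace ℝ E]
  [MeasurableSpace E] [BorelSpace E] {α β : ℝ}

lemma measurable_greenMajorant_mul_norm_rpow {δ : E → ℝ} (hδ : LipschitzWith 1 δ)
    (x y : E) (q : ℝ) :
    Measurable fun z => greenMajorant α δ (x + z) y * ‖z‖ ^ q := by
  have hδ' := hδ.continuous.measurable
  unfold greenMajorant
  fun_prop

variable [FiniteDimensional ℝ E] [Nontrivial E] (μ : Measure E) [μ.IsAddHaarMeasure]

lemma exists_hasSetIntegralLE_near_pole (hα₀ : 0 < α) (hβn : 0 ≤ β + finrank ℝ E) :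
    ∃ C ≥ 0, ∀ (δ : E → ℝ) (x y : E), LipschitzWith 1 δ → (∀ x, 0 ≤ δ x) → x ≠ y →
      HasSetIntegralLE μ (fun z => greenMajorant α δ (x + z) y * ‖z‖ ^ (-β - finrank ℝ E))
        {z | ‖x + z - y‖ ≤ ‖x - y‖ / 2} (C * mergedKernel α β δ x y) := by
  set S := μ.toSphere.real univ
  refine ⟨(1 / 2) ^ (-β - finrank ℝ E) * (1 / 2) ^ (α / 2) * S / (α / 2), by positivity,
    fun δ x y hδ hδ₀ hxy => ?_⟩
  have hr : 0 < ‖x - y‖ := norm_sub_pos_iff.2 hxy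
  have hy := hδ₀ y
  have hball : HasSetIntegralLE μ (fun z => ‖x + z - y‖ ^ (α / 2 - finrank ℝ E))
      {z | ‖x + z - y‖ ≤ ‖x - y‖ / 2} (S * ((‖x - y‖ / 2) ^ (α / 2) / (α / 2))) := by
    simp only [add_sub_right_comm x]
    exact (hasSetIntegralLE_norm_rpow_le μ (half_pos hα₀) (half_pos hr).le).comp_add_left (x - y)
  set r := ‖x - y‖ with hr_def
  set m := min 1 (δ y / r) ^ (α / 2)
  refine ((hball.const_mul (c := r ^ (α / 2) * m * (r / 2) ^ (-β - finrank ℝ E))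
    (by positivity)).of_le (measurableSet_le (by fun_prop) (by fun_prop))
    (measurable_greenMajorant_mul_norm_rpow hδ x y _).aestronglyMeasurable
    (.of_forall fun z hz => ?_)).trans_le ?_
  · have hz : ‖x + z - y‖ ≤ r / 2 := hz
    have hnorm : r / 2 ≤ ‖z‖ := by
      have : r ≤ ‖x + z - y‖ + ‖z‖ := by
        rw [hr_def, show x - y = x + z - y - z by abel]
        exact norm_sub_le _ _
      linarith
    refine ⟨mul_nonneg (greenMajorant_nonneg hδ₀) (by positivity), ?_⟩
    rw [mul_right_comm]
    gcongr ?_ * ?_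
    · exact greenMajorant_le_of_norm_sub_le hα₀ hδ₀ (by linarith)
    · exact Real.rpow_le_rpow_of_nonpos (by positivity) hnorm (by linarith)
  · calc _ = (1 / 2) ^ (-β - finrank ℝ E) * (1 / 2) ^ (α / 2) * S / (α / 2)
          * (r ^ (α - β - finrank ℝ E) * m) := by
          rw [show α - β - finrank ℝ E = α / 2 + (-β - finrank ℝ E) + α / 2 by ring,
            Real.rpow_add hr, Real.rpow_add hr, div_eq_mul_one_div r,
            Real.mul_rpow hr.le (by norm_num), Real.mul_rpow hr.le (by norm_num)]
          ring
      _ ≤ _ := by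
          gcongr
          exact rpow_mul_min_rpow_le_mergedKernel hδ₀

lemma exists_hasSetIntegralLE_shell (hα₀ : 0 ≤ α) (hαn : α ≤ finrank ℝ E) :
    ∃ C ≥ 0, ∀ (δ : E → ℝ) (x y : E), LipschitzWith 1 δ → (∀ x, 0 ≤ δ x) → x ≠ y → 0 < δ x →
      HasSetIntegralLE μ (fun z => greenMajorant α δ (x + z) y * ‖z‖ ^ (-β - finrank ℝ E))
        {z | ‖z‖ ∈ Ioc (min (δ x) ‖x - y‖ / 2) ‖x - y‖ ∧ ‖x - y‖ / 2 ≤ ‖x + z - y‖}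
        (C * mergedKernel α β δ x y) := by
  obtain ⟨C, hC, hshell⟩ := exists_hasSetIntegralLE_norm_rpow_shell μ (α / 2 - β)
  refine ⟨(1 / 2) ^ (α - finrank ℝ E) * 2 ^ (α / 2) * 6 ^ (α / 2) * C, by positivity,
    fun δ x y hδ hδ₀ hxy hx => ?_⟩
  have hr : 0 < ‖x - y‖ := norm_sub_pos_iff.2 hxy
  have hy := hδ₀ y
  replace hshell := hshell ‖x - y‖ (max 1 (‖x - y‖ / δ x)) hr (le_max_left _ _)
  rw [← half_min_eq_div_two_mul_max hr hx] at hshell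
  have hl : 0 < min (δ x) ‖x - y‖ / 2 := by positivity
  set l := min (δ x) ‖x - y‖ / 2
  set r := ‖x - y‖
  set m := min 1 (δ y / r) ^ (α / 2)
  have hdist : Measurable fun z : E => ‖x + z - y‖ := by fun_prop
  have hs : MeasurableSet {z : E | ‖z‖ ∈ Ioc l r ∧ r / 2 ≤ ‖x + z - y‖} :=
    (measurable_norm measurableSet_Ioc).inter (hdist measurableSet_Ici)
  refine (((hshell.mono_set (fun z => by positivity) fun z hz => hz.1).const_mul
    (c := (r / 2) ^ (α - finrank ℝ E) * 2 ^ (α / 2) * m * (6 / r) ^ (α / 2))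
    (by positivity)).of_le hs
    (measurable_greenMajorant_mul_norm_rpow hδ x y _).aestronglyMeasurable
    (.of_forall fun z ⟨hz, hwy⟩ => ?_)).trans_le (le_of_eq ?_)
  · have hz₀ : 0 < ‖z‖ := hl.trans hz.1
    have hw := hδ₀ (x + z)
    refine ⟨mul_nonneg (greenMajorant_nonneg hδ₀) (by positivity), ?_⟩
    calc greenMajorant α δ (x + z) y * ‖z‖ ^ (-β - finrank ℝ E)
        ≤ (r / 2) ^ (α - finrank ℝ E) * 2 ^ (α / 2) * m * (6 * ‖z‖ / r) ^ (α / 2)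
            * ‖z‖ ^ (-β - finrank ℝ E) := by
          gcongr
          refine (greenMajorant_le_of_half_le_norm_sub hα₀ hαn hδ₀ hr hwy).trans ?_
          gcongr
          exact min_one_div_norm_sub_le hδ hxy hz.1 hwy
      _ = _ := by
          rw [mul_div_right_comm, Real.mul_rpow (by positivity) hz₀.le,
            show α / 2 - β - finrank ℝ E = α / 2 + (-β - finrank ℝ E) by ring, Real.rpow_add hz₀]
          ring
  · have hK : mergedKernel α β δ x y = r ^ (α - β - finrank ℝ E) * m
        * shellProfile (α / 2 - β) (max 1 (r / δ x)) := rfl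
    rw [hK, show α - β - finrank ℝ E = (α - finrank ℝ E) - α / 2 + (α / 2 - β) by ring,
      Real.rpow_add hr _ (α / 2 - β), Real.rpow_sub hr _ (α / 2),
      Real.div_rpow (by norm_num) hr.le, div_eq_mul_one_div r, Real.mul_rpow hr.le (by norm_num)]
    ring

lemma exists_hasSetIntegralLE_far (hα₀ : 0 ≤ α) (hαn : α ≤ finrank ℝ E) (hβ : 0 < β) :
    ∃ C ≥ 0, ∀ (δ : E → ℝ) (x y : E), LipschitzWith 1 δ → (∀ x, 0 ≤ δ x) → x ≠ y →
      HasSetIntegralLE μ (fun z => greenMajorant α δ (x + z) y * ‖z‖ ^ (-β - finrank ℝ E))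
        {z | ‖x - y‖ < ‖z‖ ∧ ‖x - y‖ / 2 ≤ ‖x + z - y‖} (C * mergedKernel α β δ x y) := by
  set S := μ.toSphere.real univ
  refine ⟨(1 / 2) ^ (α - finrank ℝ E) * 2 ^ (α / 2) * S / β, by positivity,
    fun δ x y hδ hδ₀ hxy => ?_⟩
  have hr : 0 < ‖x - y‖ := norm_sub_pos_iff.2 hxy
  have hy := hδ₀ y
  have hfar := hasSetIntegralLE_norm_rpow_gt μ hβ hr
  set r := ‖x - y‖
  set m := min 1 (δ y / r) ^ (α / 2)
  have hdist : Measurable fun z : E => ‖x + z - y‖ := by fun_prop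
  have hs : MeasurableSet {z : E | r < ‖z‖ ∧ r / 2 ≤ ‖x + z - y‖} :=
    (measurable_norm measurableSet_Ioi).inter (hdist measurableSet_Ici)
  refine (((hfar.mono_set (fun z => by positivity) fun z hz => hz.1).const_mul
    (c := (r / 2) ^ (α - finrank ℝ E) * 2 ^ (α / 2) * m) (by positivity)).of_le hs
    (measurable_greenMajorant_mul_norm_rpow hδ x y _).aestronglyMeasurable
    (.of_forall fun z ⟨_, hwy⟩ => ?_)).trans_le ?_
  · have hw := hδ₀ (x + z)
    refine ⟨mul_nonneg (greenMajorant_nonneg hδ₀) (by positivity), ?_⟩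
    gcongr
    refine (greenMajorant_le_of_half_le_norm_sub hα₀ hαn hδ₀ hr hwy).trans ?_
    exact mul_le_of_le_one_right (by positivity)
      (Real.rpow_le_one (by positivity) (min_le_left _ _) (by linarith))
  · calc _ = (1 / 2) ^ (α - finrank ℝ E) * 2 ^ (α / 2) * S / β
          * (r ^ (α - β - finrank ℝ E) * m) := by
          rw [show α - β - finrank ℝ E = (α - finrank ℝ E) + -β by ring, Real.rpow_add hr,
            div_eq_mul_one_div r, Real.mul_rpow hr.le (by norm_num)]
          ring
      _ ≤ _ := by
          gcongr
          exact rpow_mul_min_rpow_le_mergedKernel hδ₀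

lemma exists_hasSetIntegralLE_greenMajorant (hα₀ : 0 < α) (hαn : α ≤ finrank ℝ E) (hβ : 0 < β) :
    ∃ C ≥ 0, ∀ (δ : E → ℝ) (x y : E), LipschitzWith 1 δ → (∀ x, 0 ≤ δ x) → x ≠ y → 0 < δ x →
      HasSetIntegralLE μ
        (fun z => (greenMajorant α δ (x + z) y + greenMajorant α δ x y)
          * ‖z‖ ^ (-β - finrank ℝ E))
        {z | min (δ x) ‖x - y‖ / 2 < ‖z‖} (C * mergedKernel α β δ x y) := by
  obtain ⟨C₁, hC₁, hnear⟩ :=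
    exists_hasSetIntegralLE_near_pole μ hα₀ (β := β) (by linarith [hα₀.trans_le hαn])
  obtain ⟨C₂, hC₂, hshell⟩ := exists_hasSetIntegralLE_shell μ (β := β) hα₀.le hαn
  obtain ⟨C₃, hC₃, hfar⟩ := exists_hasSetIntegralLE_far μ hα₀.le hαn hβ
  set S := μ.toSphere.real univ
  refine ⟨C₁ + (C₂ + C₃) + S / β * 2 ^ β, by positivity, fun δ x y hδ hδ₀ hxy hx => ?_⟩
  have hl : 0 < min (δ x) ‖x - y‖ / 2 := half_pos (lt_min hx (norm_sub_pos_iff.2 hxy))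
  have h₀ : ∀ z, 0 ≤ greenMajorant α δ (x + z) y * ‖z‖ ^ (-β - finrank ℝ E) :=
    fun z => mul_nonneg (greenMajorant_nonneg hδ₀) (by positivity)
  have hjump := ((hnear δ x y hδ hδ₀ hxy).union ((hshell δ x y hδ hδ₀ hxy hx).union
    (hfar δ x y hδ hδ₀ hxy) h₀) h₀).mono_set (s := {z | min (δ x) ‖x - y‖ / 2 < ‖z‖}) h₀
    fun z hz => by
      rcases le_total ‖x + z - y‖ (‖x - y‖ / 2) with h | h
      · exact .inl h
      · rcases le_or_gt ‖z‖ ‖x - y‖ with h' | h'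
        · exact .inr (.inl ⟨⟨hz, h'⟩, h⟩)
        · exact .inr (.inr ⟨h', h⟩)
  have hself := (hasSetIntegralLE_norm_rpow_gt μ hβ hl).const_mul
    (greenMajorant_nonneg (α := α) (x := x) (y := y) hδ₀)
  simp only [add_mul]
  refine (hjump.add hself).trans_le ?_
  have := greenMajorant_mul_rpow_half_min_le (α := α) (β := β) hδ₀ hxy hx
  calc _ = C₁ * mergedKernel α β δ x y
          + (C₂ * mergedKernel α β δ x y + C₃ * mergedKernel α β δ x y)
          + S / β * (greenMajorant α δ x y * (min (δ x) ‖x - y‖ / 2) ^ (-β)) := by ring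
    _ ≤ C₁ * mergedKernel α β δ x y
          + (C₂ * mergedKernel α β δ x y + C₃ * mergedKernel α β δ x y)
          + S / β * (2 ^ β * mergedKernel α β δ x y) := by gcongr
    _ = _ := by ring

end JumpPart

section Taylor

variable {E F : Type*} [NormedAddCommGroup E] [NormedSpace ℝ E] [NormedAddCommGroup F]
  [NormedSpace ℝ F]

lemma norm_taylor_remainder_le {f : E → F} {x z : E} {B : ℝ}
    (hf : ∀ w ∈ closedBall x ‖z‖, ContDiffAt ℝ 2 f w)
    (hB : ∀ w ∈ closedBall x ‖z‖, ‖fderiv ℝ (fderiv ℝ f) w‖ ≤ B) :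
    ‖f (x + z) - f x - fderiv ℝ f x z‖ ≤ B * ‖z‖ ^ 2 := by
  have hx : x ∈ closedBall x ‖z‖ := mem_closedBall_self (norm_nonneg z)
  have hB₀ : 0 ≤ B := (norm_nonneg (fderiv ℝ (fderiv ℝ f) x)).trans (hB x hx)
  have hfderiv : ∀ w ∈ closedBall x ‖z‖, ‖fderiv ℝ f w - fderiv ℝ f x‖ ≤ B * ‖z‖ := by
    intro w hw
    refine ((convex_closedBall x ‖z‖).norm_image_sub_le_of_norm_fderiv_le (𝕜 := ℝ)
      (fun w hw => ?_) hB hx hw).trans ?_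
    · exact ((hf w hw).fderiv_right (m := 1) (by norm_num)).differentiableAt one_ne_zero
    · gcongr
      exact mem_closedBall_iff_norm.1 hw
  calc ‖f (x + z) - f x - fderiv ℝ f x z‖
      = ‖f (x + z) - f x - fderiv ℝ f x (x + z - x)‖ := by rw [add_sub_cancel_left]
    _ ≤ B * ‖z‖ * ‖x + z - x‖ :=
        (convex_closedBall x ‖z‖).norm_image_sub_le_of_norm_fderiv_le' (𝕜 := ℝ)
          (fun w hw => (hf w hw).differentiableAt two_ne_zero) hfderiv hx
          (by simp only [mem_closedBall, dist_self_add_left, le_refl])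
    _ = B * ‖z‖ ^ 2 := by rw [add_sub_cancel_left]; ring

lemma exists_norm_fderiv_fderiv_le {ι : Type*} [Finite ι] (v : Module.Basis ι ℝ E) :
    ∃ C > 0, ∀ (f : E → F) (w : E) (B : ℝ), 0 ≤ B → ContDiffAt ℝ 2 f w →
      (∀ i j, ‖fderiv ℝ (fun w => fderiv ℝ f w (v i)) w (v j)‖ ≤ B) →
      ‖fderiv ℝ (fderiv ℝ f) w‖ ≤ C * B := by
  obtain ⟨C₁, hC₁, hnorm₁⟩ := v.exists_opNorm_le (F := F)
  obtain ⟨C₂, hC₂, hnorm₂⟩ := v.exists_opNorm_le (F := E →L[ℝ] F)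
  refine ⟨C₂ * C₁, mul_pos hC₂ hC₁, fun f w B hB hf hfB => ?_⟩
  have hd : DifferentiableAt ℝ (fderiv ℝ f) w :=
    (hf.fderiv_right (m := 1) (by norm_num)).differentiableAt one_ne_zero
  rw [mul_assoc]
  refine hnorm₂ (by positivity) fun j => hnorm₁ hB fun i => ?_
  simpa only [fderiv_clm_apply hd (differentiableAt_const _), fderiv_fun_const, Pi.zero_apply,
    ContinuousLinearMap.comp_zero, zero_add, ContinuousLinearMap.flip_apply] using hfB i j

lemma exists_taylor_remainder_le_hessianMajorant {ι : Type*} [Finite ι] (v : Module.Basis ι ℝ E)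
    {α : ℝ} (hα₀ : 0 ≤ α) (hα₄ : α ≤ 4) (hαn : α ≤ Module.finrank ℝ E + 2) :
    ∃ C ≥ 0, ∀ (δ : E → ℝ) (x y : E) (f : E → ℝ) (c : ℝ), LipschitzWith 1 δ →
      (∀ x, 0 ≤ δ x) → x ≠ y → 0 < δ x → 0 ≤ c →
      (∀ w ∈ closedBall x (min (δ x) ‖x - y‖ / 2), ContDiffAt ℝ 2 f w) →
      (∀ w ∈ closedBall x (min (δ x) ‖x - y‖ / 2), ∀ i j,
        |fderiv ℝ (fun w => fderiv ℝ f w (v i)) w (v j)| ≤ c * hessianMajorant α δ w y) →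
      ∀ z, ‖z‖ ≤ min (δ x) ‖x - y‖ / 2 →
        |f (x + z) - f x - fderiv ℝ f x z| ≤ C * c * hessianMajorant α δ x y * ‖z‖ ^ 2 := by
  obtain ⟨T, hT, hop⟩ := exists_norm_fderiv_fderiv_le (F := ℝ) v
  set H : ℝ := (1 / 2) ^ (α - Module.finrank ℝ E - 2) * 2 ^ (α / 2) * 3 ^ (2 - α / 2)
  refine ⟨T * H, by positivity, fun δ x y f c hδ hδ₀ hxy hx hc hf hfB z hz => ?_⟩
  have hsub := closedBall_subset_closedBall (x := x) hz
  refine norm_taylor_remainder_le (fun w hw => hf w (hsub hw)) fun w hw => ?_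
  have hK := hessianMajorant_nonneg (α := α) (x := x) (y := y) hδ₀
  calc ‖fderiv ℝ (fderiv ℝ f) w‖
      ≤ T * (c * (H * hessianMajorant α δ x y)) := by
        refine hop f w _ (by positivity) (hf w (hsub hw)) fun i j => ?_
        refine (hfB w (hsub hw) i j).trans ?_
        gcongr
        exact hessianMajorant_le_of_mem_closedBall hα₀ hα₄ hαn hδ hδ₀ hxy hx (hsub hw)
    _ = T * H * c * hessianMajorant α δ x y := by ring

end Taylor

lemma ball_infDist_frontier_subset {E : Type*} [NormedAddCommGroup E] [NormedSpace ℝ E] {D : Set E}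
    (hD : IsOpen D) {x : E} (hx : x ∈ D) : ball x (infDist x (frontier D)) ⊆ D := by
  rcases (ball x (infDist x (frontier D))).eq_empty_or_nonempty with h | h
  · exact h ▸ empty_subset D
  refine (convex_ball x _).isPreconnected.subset_of_closure_inter_subset hD
    ⟨x, mem_ball_self (nonempty_ball.1 h), hx⟩ fun w ⟨hw, hw_ball⟩ => ?_
  by_contra hwD
  exact disjoint_left.1 disjoint_ball_infDist hw_ball (hD.frontier_eq ▸ ⟨hw, hwD⟩)

lemma infDist_frontier_pos {E : Type*} [NormedAddCommGroup E] [NormedSpace ℝ E] {D : Set E}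
    (hD : IsOpen D) (hD_univ : D ≠ univ) {x : E} (hx : x ∈ D) : 0 < infDist x (frontier D) := by
  have hne : (frontier D).Nonempty := nonempty_frontier_iff.2 ⟨⟨x, hx⟩, hD_univ⟩
  refine (isClosed_frontier.notMem_iff_infDist_pos hne).1 fun h => ?_
  rw [hD.frontier_eq] at h
  exact h.2 hx

lemma closedBall_half_min_subset_diff_singleton {E : Type*} [NormedAddCommGroup E]
    [NormedSpace ℝ E] {D : Set E} (hD : IsOpen D) (hD_univ : D ≠ univ) {x y : E} (hx : x ∈ D)
    (hxy : x ≠ y) : closedBall x (min (infDist x (frontier D)) ‖x - y‖ / 2) ⊆ D \ {y} := by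
  have hδ : 0 < infDist x (frontier D) := infDist_frontier_pos hD hD_univ hx
  have hr : 0 < ‖x - y‖ := norm_sub_pos_iff.2 hxy
  refine fun w hw => ⟨ball_infDist_frontier_subset hD hx ?_, ?_⟩
  · refine closedBall_subset_ball ?_ hw
    linarith [min_le_left (infDist x (frontier D)) ‖x - y‖]
  · rintro rfl
    have := half_norm_sub_le_of_mem_closedBall (δ := (infDist · (frontier D))) hw
    rw [sub_self, norm_zero] at this
    linarith

section Operator

open Module (finrank)

variable {E : Type*} [NormedAddCommGroup E] [NormedSpace ℝ E] [FiniteDimensional ℝ E]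
  [Nontrivial E] [MeasurableSpace E] [BorelSpace E] (μ : Measure E) [μ.IsAddHaarMeasure] {α β : ℝ}

lemma aestronglyMeasurable_of_continuousOn_diff_singleton {D : Set E} {y : E} {f : E → ℝ}
    (hD : IsOpen D) (hf : ContinuousOn f (D \ {y})) (hf₀ : ∀ w ∉ D, f w = 0) :
    AEStronglyMeasurable f μ := by
  have hD' : MeasurableSet (D \ {y}) := hD.measurableSet.diff (measurableSet_singleton y)
  refine ((aestronglyMeasurable_indicator_iff hD').2 (hf.aestronglyMeasurable hD')).congr ?_
  filter_upwards [μ.ae_ne y] with w hw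
  by_cases hwD : w ∈ D
  · exact indicator_of_mem (s := D \ {y}) ⟨hwD, hw⟩ f
  · rw [indicator_of_notMem (fun h => hwD h.1), hf₀ w hwD]

lemma exists_hasSetIntegralLE_taylor {ι : Type*} [Finite ι] (v : Module.Basis ι ℝ E)
    (hα₀ : 0 ≤ α) (hα₄ : α ≤ 4) (hαn : α ≤ finrank ℝ E + 2) (hβ : β < 2) :
    ∃ C ≥ 0, ∀ (δ : E → ℝ) (x y : E) (f b : E → ℝ) (c A : ℝ), LipschitzWith 1 δ →
      (∀ x, 0 ≤ δ x) → x ≠ y → 0 < δ x → 0 ≤ c →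
      (∀ w ∈ closedBall x (min (δ x) ‖x - y‖ / 2), ContDiffAt ℝ 2 f w) →
      (∀ w ∈ closedBall x (min (δ x) ‖x - y‖ / 2), ∀ i j,
        |fderiv ℝ (fun w => fderiv ℝ f w (v i)) w (v j)| ≤ c * hessianMajorant α δ w y) →
      Measurable b → (∀ z, |b z| ≤ A) →
      HasSetIntegralLE μ
        (fun z => |f (x + z) - f x - fderiv ℝ f x z| * |b z| * ‖z‖ ^ (-(finrank ℝ E : ℝ) - β))
        {z | ‖z‖ ≤ min (δ x) ‖x - y‖ / 2} (C * c * A * mergedKernel α β δ x y) := by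
  obtain ⟨T, hT, htaylor⟩ := exists_taylor_remainder_le_hessianMajorant v hα₀ hα₄ hαn
  set S := μ.toSphere.real univ
  have hβ₂ : 0 < 2 - β := by linarith
  refine ⟨T * S / (2 - β) * 2 ^ (β - 2), by positivity,
    fun δ x y f b c A hδ hδ₀ hxy hx hc hf hfB hb hbA => ?_⟩
  replace htaylor := htaylor δ x y f c hδ hδ₀ hxy hx hc hf hfB
  have hA : 0 ≤ A := (abs_nonneg _).trans (hbA 0)
  have hK := hessianMajorant_nonneg (α := α) (x := x) (y := y) hδ₀
  have hl : 0 ≤ min (δ x) ‖x - y‖ / 2 := half_pos (lt_min hx (norm_sub_pos_iff.2 hxy)) |>.le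
  have hs : MeasurableSet {z : E | ‖z‖ ≤ min (δ x) ‖x - y‖ / 2} := measurable_norm measurableSet_Iic
  have hf_cont : ContinuousOn (fun z => f (x + z)) {z | ‖z‖ ≤ min (δ x) ‖x - y‖ / 2} :=
    ContinuousOn.comp (fun w hw => (hf w hw).continuousAt.continuousWithinAt)
      (continuous_const_add x).continuousOn fun z hz => by
        rwa [mem_closedBall, dist_self_add_left]
  have hball := hasSetIntegralLE_norm_rpow_le μ hβ₂ hl
  refine ((hball.const_mul (c := T * c * hessianMajorant α δ x y * A) (by positivity)).of_le hs ?_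
    ?_).trans_le ?_
  · have hrem : ContinuousOn (fun z => |f (x + z) - f x - fderiv ℝ f x z|)
        {z | ‖z‖ ≤ min (δ x) ‖x - y‖ / 2} :=
      ((hf_cont.sub continuousOn_const).sub (fderiv ℝ f x).continuous.continuousOn).abs
    exact ((hrem.aestronglyMeasurable hs).mul hb.aestronglyMeasurable.norm).mul
      (Measurable.aestronglyMeasurable (by fun_prop))
  · filter_upwards [μ.ae_ne 0] with z hz₀ hz
    refine ⟨by positivity, ?_⟩
    calc |f (x + z) - f x - fderiv ℝ f x z| * |b z| * ‖z‖ ^ (-(finrank ℝ E : ℝ) - β)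
        ≤ T * c * hessianMajorant α δ x y * ‖z‖ ^ 2 * A * ‖z‖ ^ (-(finrank ℝ E : ℝ) - β) := by
          gcongr
          exacts [htaylor z hz, hbA z]
      _ = _ := by
          rw [show 2 - β - finrank ℝ E = 2 + (-(finrank ℝ E : ℝ) - β) by ring,
            Real.rpow_add (norm_pos_iff.2 hz₀), Real.rpow_two]
          ring
  · calc _ = T * S / (2 - β) * c * A
          * (hessianMajorant α δ x y * (min (δ x) ‖x - y‖ / 2) ^ (2 - β)) := by ring
      _ ≤ T * S / (2 - β) * c * A * (2 ^ (β - 2) * mergedKernel α β δ x y) :=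
          mul_le_mul_of_nonneg_left (rpow_mul_rpow_half_min_le_mergedKernel 2 hδ₀ hxy hx)
            (by positivity)
      _ = _ := by ring

lemma exists_hasSetIntegralLE_jump (hα₀ : 0 < α) (hαn : α ≤ finrank ℝ E) (hβ : 0 < β) :
    ∃ C ≥ 0, ∀ (δ : E → ℝ) (x y : E) (f b : E → ℝ) (c A : ℝ), LipschitzWith 1 δ →
      (∀ x, 0 ≤ δ x) → x ≠ y → 0 < δ x → 0 ≤ c → AEStronglyMeasurable f μ →
      (∀ w ≠ y, 0 ≤ f w ∧ f w ≤ c * greenMajorant α δ w y) →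
      Measurable b → (∀ z, |b z| ≤ A) →
      HasSetIntegralLE μ
        (fun z => (f (x + z) + f x) * |b z| * ‖z‖ ^ (-(finrank ℝ E : ℝ) - β))
        {z | min (δ x) ‖x - y‖ / 2 < ‖z‖} (C * c * A * mergedKernel α β δ x y) := by
  obtain ⟨C, hC, hmajorant⟩ := exists_hasSetIntegralLE_greenMajorant μ hα₀ hαn hβ
  refine ⟨C, hC, fun δ x y f b c A hδ hδ₀ hxy hx hc hf hf_le hb hbA => ?_⟩
  have hA : 0 ≤ A := (abs_nonneg _).trans (hbA 0)
  have hf_shift : AEStronglyMeasurable (fun z => f (x + z)) μ :=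
    hf.comp_measurePreserving (measurePreserving_add_left μ x)
  rw [neg_sub_comm]
  refine (((hmajorant δ x y hδ hδ₀ hxy hx).const_mul (mul_nonneg hc hA)).of_le
    (measurableSet_lt (by fun_prop) (by fun_prop)) ?_ ?_).trans_le (le_of_eq (by ring))
  · exact (((hf_shift.add_const _).mul hb.aestronglyMeasurable.norm).mul
      (Measurable.aestronglyMeasurable (by fun_prop))).restrict
  · filter_upwards [μ.ae_ne (y - x)] with z hz _
    obtain ⟨hfz₀, hfz⟩ := hf_le (x + z) fun h => hz (eq_sub_of_add_eq' h)
    obtain ⟨hfx₀, hfx⟩ := hf_le x hxy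
    refine ⟨by positivity, ?_⟩
    have hbz := hbA z
    calc (f (x + z) + f x) * |b z| * ‖z‖ ^ (-β - finrank ℝ E)
        ≤ (c * greenMajorant α δ (x + z) y + c * greenMajorant α δ x y) * A
            * ‖z‖ ^ (-β - finrank ℝ E) := by
          gcongr
          exact (add_nonneg hfz₀ hfx₀).trans (add_le_add hfz hfx)
      _ = _ := by ring

lemma exists_hasSetIntegralLE_taylor_and_jump {ι : Type*} [Finite ι] (v : Module.Basis ι ℝ E)
    (hα₀ : 0 < α) (hα₄ : α ≤ 4) (hαn : α ≤ finrank ℝ E) (hβ₀ : 0 < β) (hβ₂ : β < 2) :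
    ∃ C ≥ 0, ∀ (D : Set E) (y : E) (f : E → ℝ) (c₀ c₂ : ℝ), IsOpen D → D ≠ univ → 0 ≤ c₀ → 0 ≤ c₂ →
      (∀ w ∉ D, f w = 0) → (∀ w ∈ D, w ≠ y → 0 ≤ f w) → ContDiffOn ℝ 2 f (D \ {y}) →
      (∀ w ∈ D, w ≠ y → f w ≤ c₀ * greenMajorant α (infDist · (frontier D)) w y) →
      (∀ w ∈ D, w ≠ y → ∀ i j, |fderiv ℝ (fun w => fderiv ℝ f w (v i)) w (v j)|
        ≤ c₂ * hessianMajorant α (infDist · (frontier D)) w y) →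
      ∀ (b : E → ℝ) (A : ℝ), Measurable b → (∀ z, |b z| ≤ A) → ∀ x ∈ D, x ≠ y →
        HasSetIntegralLE μ
          (fun z => |f (x + z) - f x - fderiv ℝ f x z| * |b z| * ‖z‖ ^ (-(finrank ℝ E : ℝ) - β))
          {z | ‖z‖ ≤ min (infDist x (frontier D)) ‖x - y‖ / 2}
          (C * c₂ * A * mergedKernel α β (infDist · (frontier D)) x y) ∧
        HasSetIntegralLE μ
          (fun z => (f (x + z) + f x) * |b z| * ‖z‖ ^ (-(finrank ℝ E : ℝ) - β))
          {z | min (infDist x (frontier D)) ‖x - y‖ / 2 < ‖z‖}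
          (C * c₀ * A * mergedKernel α β (infDist · (frontier D)) x y) := by
  obtain ⟨C₁, hC₁, htaylor⟩ :=
    exists_hasSetIntegralLE_taylor μ (β := β) v hα₀.le hα₄ (by linarith) hβ₂
  obtain ⟨C₂, -, hjump⟩ := exists_hasSetIntegralLE_jump μ hα₀ hαn hβ₀
  refine ⟨max C₁ C₂, by positivity, ?_⟩
  intro D y f c₀ c₂ hD hD_univ hc₀ hc₂ hf₀ hf_nonneg hf hf_le hf_hess b A hb hbA x hx hxy
  have hA : 0 ≤ A := (abs_nonneg _).trans (hbA 0)
  have hδ : LipschitzWith 1 (infDist · (frontier D)) := lipschitz_infDist_pt _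
  have hδ₀ : ∀ w, 0 ≤ infDist w (frontier D) := fun _ => infDist_nonneg
  have hδx : 0 < infDist x (frontier D) := infDist_frontier_pos hD hD_univ hx
  have hK := mergedKernel_nonneg (α := α) (β := β) (x := x) (y := y) hδ₀
  have hball := closedBall_half_min_subset_diff_singleton hD hD_univ hx hxy
  have hf_bounds : ∀ w ≠ y, 0 ≤ f w ∧ f w ≤ c₀ * greenMajorant α (infDist · (frontier D)) w y := by
    intro w hw
    by_cases hwD : w ∈ D
    · exact ⟨hf_nonneg w hwD hw, hf_le w hwD hw⟩
    · rw [hf₀ w hwD]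
      exact ⟨le_rfl, mul_nonneg hc₀ (greenMajorant_nonneg hδ₀)⟩
  constructor
  · refine (htaylor _ x y f b c₂ A hδ hδ₀ hxy hδx hc₂
      (fun w hw => hf.contDiffAt ((hD.sdiff isClosed_singleton).mem_nhds (hball hw)))
      (fun w hw => hf_hess w (hball hw).1 (hball hw).2) hb hbA).trans_le ?_
    gcongr
    exact le_max_left _ _
  · refine (hjump _ x y f b c₀ A hδ hδ₀ hxy hδx hc₀
      (aestronglyMeasurable_of_continuousOn_diff_singleton μ hD hf.continuousOn hf₀)
      hf_bounds hb hbA).trans_le ?_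
    gcongr
    exact le_max_right _ _

end Operator

lemma hKer_eq_mergedKernel {d : ℕ} (α β : ℝ) (D : Set (EuclideanSpace ℝ (Fin d)))
    (x y : EuclideanSpace ℝ (Fin d)) : hKer α β D x y = mergedKernel α β (deltaD D) x y := by
  have hx : 0 ≤ deltaD D x := infDist_nonneg
  have hpos : 2 * β < α ↔ 0 < α / 2 - β := by constructor <;> intro h <;> linarith
  have hzero : α = 2 * β ↔ α / 2 - β = 0 := by constructor <;> intro h <;> linarith
  rw [hKer, mergedKernel, shellProfile, finrank_euclideanSpace_fin]
  by_cases h₁ : 2 * β < α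
  · rw [if_pos h₁, if_pos (hpos.1 h₁), mul_one]
  · rw [if_neg h₁, if_neg (hpos.not.1 h₁)]
    by_cases h₂ : α = 2 * β
    · have hlog : max 1 (Real.log (max 1 (‖x - y‖ / deltaD D x)))
          = max 1 (Real.log (‖x - y‖ / deltaD D x)) := by
        rcases le_total (‖x - y‖ / deltaD D x) 1 with h | h
        · rw [max_eq_left h, Real.log_one, max_eq_left zero_le_one,
            max_eq_left ((Real.log_nonpos (by positivity) h).trans zero_le_one)]
        · rw [max_eq_right h]
      rw [if_pos h₂, if_pos (hzero.1 h₂), hlog, h₂, mul_div_cancel_left₀ β two_ne_zero]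
      ring_nf
    · rw [if_neg h₂, if_neg (hzero.not.1 h₂), neg_sub]

lemma stableConst_nonneg (d : ℕ) {γ : ℝ} (hγ₀ : 0 ≤ γ) (hγ₂ : γ ≤ 2) : 0 ≤ stableConst d γ := by
  have hΓ : 0 ≤ Real.Gamma ((d + γ) / 2) := Real.Gamma_nonneg_of_nonneg (by positivity)
  have hΓ' : 0 ≤ Real.Gamma (1 - γ / 2) := Real.Gamma_nonneg_of_nonneg (by linarith)
  unfold stableConst
  exact mul_nonneg (mul_nonneg (by positivity) hΓ) (inv_nonneg.2 hΓ')

theorem Sb_G_bound_general (d : ℕ) (α β : ℝ) (hβ : 0 < β) (hβ₂ : β < 2) (hα : 0 < α) (hα₄ : α ≤ 4)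
    (hαd : α ≤ d) (c₀ c₂ : ℝ) (hc₀ : 0 ≤ c₀) (hc₂ : 0 ≤ c₂) :
    ∃ C > 0, ∀ (D : Set (EuclideanSpace ℝ (Fin d))), IsOpen D → D ≠ univ →
      ∀ G : EuclideanSpace ℝ (Fin d) → EuclideanSpace ℝ (Fin d) → ℝ,
      (∀ x y, x ∉ D ∨ y ∉ D → G x y = 0) →
      (∀ x ∈ D, ∀ y ∈ D, x ≠ y → 0 ≤ G x y) →
      (∀ y ∈ D, ContDiffOn ℝ 2 (fun w => G w y) (D \ {y})) →
      (∀ x ∈ D, ∀ y ∈ D, x ≠ y →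
        G x y ≤ c₀ * ‖x - y‖ ^ (α - (d : ℝ)) * min 1 (deltaD D x / ‖x - y‖) ^ (α / 2)
          * min 1 (deltaD D y / ‖x - y‖) ^ (α / 2)) →
      (∀ x ∈ D, ∀ y ∈ D, x ≠ y → ∀ i j : Fin d,
        |fderiv ℝ (fun w => fderiv ℝ (fun w' => G w' y) w (EuclideanSpace.single i (1 : ℝ))) x
            (EuclideanSpace.single j (1 : ℝ))|
          ≤ c₂ * ‖x - y‖ ^ (α - (d : ℝ) - 2) * min 1 (deltaD D y / ‖x - y‖) ^ (α / 2)
            * max 1 (‖x - y‖ / deltaD D x) ^ (2 - α / 2)) →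
      ∀ (b : EuclideanSpace ℝ (Fin d) → EuclideanSpace ℝ (Fin d) → ℝ) (A : ℝ),
        Measurable (Function.uncurry b) → (∀ x z, |b x z| ≤ A) →
        ∀ x ∈ D, ∀ y ∈ D, x ≠ y →
          IntegrableOn (fun z => |G (x + z) y - G x y - fderiv ℝ (fun w => G w y) x z| * |b x z|
              * ‖z‖ ^ (-(d : ℝ) - β))
            {z | ‖z‖ ≤ min (deltaD D x) ‖x - y‖ / 2} ∧
          IntegrableOn (fun z => (G (x + z) y + G x y) * |b x z| * ‖z‖ ^ (-(d : ℝ) - β))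
            {z | min (deltaD D x) ‖x - y‖ / 2 < ‖z‖} ∧
          stableConst d β *
            ((∫ z in {z : EuclideanSpace ℝ (Fin d) | ‖z‖ ≤ min (deltaD D x) ‖x - y‖ / 2},
                |G (x + z) y - G x y - fderiv ℝ (fun w => G w y) x z| * |b x z|
                  * ‖z‖ ^ (-(d : ℝ) - β))
              + ∫ z in {z : EuclideanSpace ℝ (Fin d) | min (deltaD D x) ‖x - y‖ / 2 < ‖z‖},
                  (G (x + z) y + G x y) * |b x z| * ‖z‖ ^ (-(d : ℝ) - β))
            ≤ C * A * hKer α β D x y := by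
  have hd : Module.finrank ℝ (EuclideanSpace ℝ (Fin d)) = d := finrank_euclideanSpace_fin
  have : Nontrivial (EuclideanSpace ℝ (Fin d)) := Module.nontrivial_of_finrank_pos (R := ℝ) <| by
    rw [hd]
    exact_mod_cast hα.trans_le hαd
  have hκ := stableConst_nonneg d hβ.le hβ₂.le
  obtain ⟨C, hC, hbound⟩ := exists_hasSetIntegralLE_taylor_and_jump volume
    (EuclideanSpace.basisFun (Fin d) ℝ).toBasis hα hα₄ (hαd.trans_eq (congrArg _ hd.symm)) hβ hβ₂
  simp only [OrthonormalBasis.coe_toBasis, EuclideanSpace.basisFun_apply, greenMajorant,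
    hessianMajorant, hd, ← mul_assoc] at hbound
  refine ⟨stableConst d β * C * (c₂ + c₀) + 1, by positivity, ?_⟩
  intro D hD hD_univ G hG₀ hG_nonneg hG hG_le hG_hess b A hb hbA x hx y hy hxy
  obtain ⟨htaylor, hjump⟩ := hbound D y (fun w => G w y) c₀ c₂ hD hD_univ hc₀ hc₂
    (fun w hw => hG₀ w y (.inl hw)) (fun w hw => hG_nonneg w hw y hy) (hG y hy)
    (fun w hw => hG_le w hw y hy) (fun w hw => hG_hess w hw y hy)
    (b x) A hb.of_uncurry_left (hbA x) x hx hxy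
  refine ⟨htaylor.1, hjump.1, ?_⟩
  have hA : 0 ≤ A := (abs_nonneg _).trans (hbA 0 0)
  have hK : 0 ≤ mergedKernel α β (deltaD D) x y := mergedKernel_nonneg fun _ => infDist_nonneg
  rw [hKer_eq_mergedKernel]
  calc _ ≤ stableConst d β * (C * c₂ * A * mergedKernel α β (deltaD D) x y
          + C * c₀ * A * mergedKernel α β (deltaD D) x y) :=
        mul_le_mul_of_nonneg_left (add_le_add htaylor.2 hjump.2) hκ
    _ = stableConst d β * C * (c₂ + c₀) * A * mergedKernel α β (deltaD D) x y := by ring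
    _ ≤ _ := by
        gcongr
        exact (lt_add_one _).le

/-- `|𝒮^b_x| G(x,y) ≤ C ‖b‖_∞ h_D(x,y)`. -/
theorem Sb_G_bound (d : ℕ) (hd : 2 ≤ d) (α β : ℝ)
    (hβ : 0 < β) (hβα : β < α) (hα : α < 2)
    (c₀ c₂ : ℝ) (hc₀ : 0 < c₀) (hc₂ : 0 < c₂) :
    ∃ C > 0, ∀ (D : Set (EuclideanSpace ℝ (Fin d))), IsOpen D → Bornology.IsBounded D →
      ∀ G : EuclideanSpace ℝ (Fin d) → EuclideanSpace ℝ (Fin d) → ℝ,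
      (∀ x y, x ∉ D ∨ y ∉ D → G x y = 0) →
      (∀ x ∈ D, ∀ y ∈ D, x ≠ y → 0 ≤ G x y) →
      (∀ y ∈ D, ContDiffOn ℝ 2 (fun w => G w y) (D \ {y})) →
      (∀ x ∈ D, ∀ y ∈ D, x ≠ y →
        G x y ≤ c₀ * ‖x - y‖ ^ (α - (d : ℝ)) * min 1 (deltaD D x / ‖x - y‖) ^ (α / 2)
          * min 1 (deltaD D y / ‖x - y‖) ^ (α / 2)) →
      (∀ x ∈ D, ∀ y ∈ D, x ≠ y → ∀ i j : Fin d,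
        |fderiv ℝ (fun w => fderiv ℝ (fun w' => G w' y) w (EuclideanSpace.single i (1 : ℝ))) x
            (EuclideanSpace.single j (1 : ℝ))|
          ≤ c₂ * ‖x - y‖ ^ (α - (d : ℝ) - 2) * min 1 (deltaD D y / ‖x - y‖) ^ (α / 2)
            * max 1 (‖x - y‖ / deltaD D x) ^ (2 - α / 2)) →
      ∀ (b : EuclideanSpace ℝ (Fin d) → EuclideanSpace ℝ (Fin d) → ℝ) (A : ℝ),
        Measurable (Function.uncurry b) → (∀ x z, |b x z| ≤ A) →
        ∀ x ∈ D, ∀ y ∈ D, x ≠ y →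
          stableConst d β *
            ((∫ z in {z : EuclideanSpace ℝ (Fin d) | ‖z‖ ≤ min (deltaD D x) ‖x - y‖ / 2},
                |G (x + z) y - G x y - fderiv ℝ (fun w => G w y) x z| * |b x z|
                  * ‖z‖ ^ (-(d : ℝ) - β))
              + ∫ z in {z : EuclideanSpace ℝ (Fin d) | min (deltaD D x) ‖x - y‖ / 2 < ‖z‖},
                  (G (x + z) y + G x y) * |b x z| * ‖z‖ ^ (-(d : ℝ) - β))
            ≤ C * A * hKer α β D x y := by
  obtain ⟨C, hC, hbound⟩ := Sb_G_bound_general d α β hβ (hβα.trans hα) (hβ.trans hβα)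
    (by linarith) (hα.le.trans (by exact_mod_cast hd)) c₀ c₂ hc₀.le hc₂.le
  refine ⟨C, hC, fun D hD hDb G hG₀ hG_nonneg hG hG_le hG_hess b A hb hbA x hx y hy hxy => ?_⟩
  have hD_univ : D ≠ univ := by
    have : Nonempty (Fin d) := ⟨⟨0, by omega⟩⟩
    rintro rfl
    exact NormedSpace.unbounded_univ ℝ _ hDb
  exact (hbound D hD hD_univ G hG₀ hG_nonneg hG hG_le hG_hess b A hb hbA x hx y hy hxy).2.2
end
end

section
/- Let d ≥ 2 and 0 < β < α < 2. Then there exists a constant c = c(d, α, β) > 0 such that for every ball B = B(x₀, r) ⊂ ℝ^d with r > 0 and all distinct x, y ∈ B: ∫_B h_B(x,z)·h_B(z,y) dz ≤ c·r^{α−β}·h_B(x,y). -/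
/-!
In all three regimes `h_D(x, y) = ρ ^ (γ - d) * min 1 (v / ρ) ^ (α / 2) * Φ (ρ / u)`, where
`γ = α - β`, `ρ = |x - y|`, `u = δ_D(x)`, `v = δ_D(y)`, and only the blow-up profile `Φ` depends on
the regime. Whichever of `a = |x - z|` and `b = |z - y|` is larger is at least `ρ / 2`, and since
`δ_D` is `1`-Lipschitz, the factors at that distance, together with the boundary factors at `z`,
are controlled by `h_D(x, y)`. What remains is the singularity at the smaller distance:
`h_D(x, z) h_D(z, y) ≤ C r ^ η (a ^ (γ - η - d) + b ^ (γ - η - d)) h_D(x, y)` for some `η < γ`,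
where `η > 0` is needed only to absorb the logarithm when `α = 2β`. The right-hand side is
integrable in `z`, with integral of order `r ^ γ`.
-/

open MeasureTheory Metric Set

noncomputable section

/-- the kernel `g_D(x,y)`, comparable to the Green function of the killed
symmetric `α`-stable process in `D` -/
def gKer {d : ℕ} (α : ℝ) (D : Set (EuclideanSpace ℝ (Fin d)))
    (x y : EuclideanSpace ℝ (Fin d)) : ℝ :=
  ‖x - y‖ ^ (α - (d : ℝ)) * min 1 (deltaD D x / ‖x - y‖) ^ (α / 2)
    * min 1 (deltaD D y / ‖x - y‖) ^ (α / 2)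

/-- The kernel `h_D(x, y)` of all three regimes as a function of `ρ = |x - y|`, `u = δ_D(x)` and
`v = δ_D(y)`: a singularity of order `s` in `ρ`, decay of order `p` as `v → 0`, and a blow-up as
`u → 0` described by the profile `Φ`. -/
def profileKernel (s p : ℝ) (Φ : ℝ → ℝ) (ρ u v : ℝ) : ℝ :=
  ρ ^ s * min 1 (v / ρ) ^ p * Φ (ρ / u)

/-- The profile `Φ` for which `h_D` is a `profileKernel`. -/
def blowupProfile (α β : ℝ) : ℝ → ℝ :=
  if 2 * β < α then fun _ => 1
  else if α = 2 * β then fun t => max 1 (Real.log t)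
  else fun t => max 1 t ^ (β - α / 2)

/-- Blow-up profiles: increasing functions on `(0, ∞)`, equal to `1` on `(0, 1]`, that grow at most
like `t ^ κ` and are supermultiplicative on `[1, ∞)` up to a factor `K * s ^ η`. Values at `t ≤ 0`
are irrelevant. -/
structure IsBlowupProfile (κ η K : ℝ) (Φ : ℝ → ℝ) : Prop where
  eq_one : ∀ t ∈ Ioc 0 1, Φ t = 1
  monotoneOn : MonotoneOn Φ (Ioi 0)
  apply_mul_le : ∀ ⦃s t : ℝ⦄, 1 ≤ s → 0 < t → Φ (s * t) ≤ K * s ^ κ * Φ t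
  mul_apply_le : ∀ ⦃s t : ℝ⦄, 1 ≤ s → 1 ≤ t → Φ s * Φ t ≤ K * s ^ η * Φ (s * t)

lemma isBlowupProfile_const_one : IsBlowupProfile 0 0 1 fun _ => 1 where
  eq_one _ _ := rfl
  monotoneOn _ _ _ _ _ := le_rfl
  apply_mul_le _ _ _ _ := by simp
  mul_apply_le _ _ _ _ := by simp

lemma isBlowupProfile_max_one_rpow {κ : ℝ} (hκ : 0 ≤ κ) :
    IsBlowupProfile κ 0 1 fun t => max 1 t ^ κ where
  eq_one _ ht := by simp [ht.2]
  monotoneOn _ _ _ _ hst := by dsimp only; gcongr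
  apply_mul_le s t hs _ := by
    have hmax : max 1 (s * t) ≤ s * max 1 t := by
      rw [mul_max_of_nonneg _ _ (by linarith), mul_one]
      gcongr
    calc max 1 (s * t) ^ κ ≤ (s * max 1 t) ^ κ := by gcongr
      _ = 1 * s ^ κ * max 1 t ^ κ := by
        rw [Real.mul_rpow (by linarith) (by positivity), one_mul]
  mul_apply_le s t hs ht := by
    rw [max_eq_right hs, max_eq_right ht, max_eq_right (one_le_mul_of_one_le_of_one_le hs ht),
      Real.mul_rpow (by linarith) (by linarith), Real.rpow_zero, one_mul, one_mul]

lemma max_one_log_mul_le {ε s t : ℝ} (hε : 0 < ε) (hs : 1 ≤ s) (ht : 0 < t) :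
    max 1 (Real.log (s * t)) ≤ (1 + 1 / ε) * s ^ ε * max 1 (Real.log t) := by
  have hs₀ : 0 < s := by linarith
  set L := max 1 (Real.log t)
  have hL : 1 ≤ L := le_max_left _ _
  have hsε : 1 ≤ s ^ ε := Real.one_le_rpow hs hε.le
  have hlog : Real.log s ≤ 1 / ε * s ^ ε * L :=
    calc Real.log s ≤ 1 / ε * s ^ ε * 1 := by
          rw [mul_one, one_div_mul_eq_div]
          exact Real.log_le_rpow_div hs₀.le hε
      _ ≤ 1 / ε * s ^ ε * L := by gcongr
  have hlog₀ : 0 ≤ Real.log s := Real.log_nonneg hs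
  calc max 1 (Real.log (s * t)) ≤ Real.log s + L := by
        rw [Real.log_mul hs₀.ne' ht.ne']
        exact max_le (by linarith) (by gcongr; exact le_max_right _ _)
    _ ≤ 1 / ε * s ^ ε * L + s ^ ε * L := by
        gcongr
        exact le_mul_of_one_le_left (by linarith) hsε
    _ = (1 + 1 / ε) * s ^ ε * L := by ring

lemma isBlowupProfile_max_one_log {ε : ℝ} (hε : 0 < ε) :
    IsBlowupProfile ε ε (1 + 1 / ε) fun t => max 1 (Real.log t) where
  eq_one _ ht := max_eq_left ((Real.log_nonpos ht.1.le ht.2).trans zero_le_one)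
  monotoneOn _ hs _ _ hst := max_le_max le_rfl (Real.log_le_log hs hst)
  apply_mul_le _ _ := max_one_log_mul_le hε
  mul_apply_le s t hs ht := by
    have ht₀ : 0 < t := by linarith
    gcongr
    · simpa using max_one_log_mul_le hε hs one_pos
    · exact le_mul_of_one_le_left ht₀.le hs

lemma exists_isBlowupProfile_blowupProfile {α β D : ℝ} (hβ : 0 < β) (hβα : β < α)
    (hαD : α < 2 * D) (hαβD : α - β ≤ D) :
    ∃ κ η K, κ ≤ α / 2 ∧ α - β + κ ≤ D ∧ 0 ≤ η ∧ η < α - β ∧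
      IsBlowupProfile κ η K (blowupProfile α β) := by
  rcases lt_trichotomy (2 * β) α with h | h | h
  · refine ⟨0, 0, 1, by linarith, by linarith, le_rfl, by linarith, ?_⟩
    simpa [blowupProfile, h] using isBlowupProfile_const_one
  · obtain ⟨ε, hε, hεβ⟩ : ∃ ε, 0 < ε ∧ ε < min β (D - β) :=
      exists_between (lt_min hβ (by linarith))
    obtain ⟨hεβ, hεD⟩ := lt_min_iff.1 hεβ
    refine ⟨ε, ε, 1 + 1 / ε, by linarith, by linarith, hε.le, by linarith, ?_⟩
    simpa [blowupProfile, h.symm] using isBlowupProfile_max_one_log hε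
  · refine ⟨β - α / 2, 0, 1, by linarith, by linarith, le_rfl, by linarith, ?_⟩
    simpa [blowupProfile, h.not_gt, h.ne] using
      isBlowupProfile_max_one_rpow (κ := β - α / 2) (by linarith)

lemma measurable_blowupProfile (α β : ℝ) : Measurable (blowupProfile α β) := by
  unfold blowupProfile
  split_ifs <;> fun_prop

lemma measurable_profileKernel {X : Type*} [MeasurableSpace X] {s p : ℝ} {Φ : ℝ → ℝ}
    (hΦ : Measurable Φ) {ρ u v : X → ℝ} (hρ : Measurable ρ) (hu : Measurable u)
    (hv : Measurable v) : Measurable fun x => profileKernel s p Φ (ρ x) (u x) (v x) := by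
  unfold profileKernel
  fun_prop

lemma min_one_div_mul_max_one_div {a w : ℝ} (ha : 0 < a) (hw : 0 < w) :
    min 1 (w / a) * max 1 (a / w) = 1 := by
  rcases le_total a w with h | h
  · rw [min_eq_left ((one_le_div ha).2 h), max_eq_left ((div_le_one hw).2 h), one_mul]
  · rw [min_eq_right ((div_le_one ha).2 h), max_eq_right ((one_le_div hw).2 h)]
    field_simp

lemma min_one_div_le_two_mul {ρ b v : ℝ} (hρ : 0 < ρ) (hv : 0 < v) (hρb : ρ ≤ 2 * b) :
    min 1 (v / b) ≤ 2 * min 1 (v / ρ) := by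
  rw [mul_min_of_nonneg _ _ zero_le_two]
  refine min_le_min (by norm_num) ?_
  calc v / b ≤ v / (ρ / 2) := by gcongr; linarith
    _ = 2 * (v / ρ) := by field_simp

lemma min_mul_min_mul_max_le {a b ρ v w : ℝ} (hb : 0 < b) (hρ : 0 < ρ) (hv : 0 < v) (hw : 0 < w)
    (hba : b ≤ a) (hρa : ρ ≤ 2 * a) (hwv : w ≤ v + b) :
    min 1 (w / a) * min 1 (v / b) * max 1 (b / w) ≤ 4 * min 1 (v / ρ) := by
  have ha : 0 < a := hb.trans_le hba
  have decay_mul_blowup_le_one : min 1 (w / a) * max 1 (b / w) ≤ 1 :=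
    calc min 1 (w / a) * max 1 (b / w) ≤ min 1 (w / a) * max 1 (a / w) := by gcongr
      _ = 1 := min_one_div_mul_max_one_div ha hw
  have decay_mul_blowup_le_div : min 1 (w / a) * max 1 (b / w) ≤ (v + b) / a :=
    calc min 1 (w / a) * max 1 (b / w) ≤ w / a * max 1 (b / w) := by
          gcongr
          exact min_le_right _ _
      _ = max w b / a := by
          rw [div_mul_eq_mul_div, mul_max_of_nonneg _ _ hw.le, mul_one, mul_div_cancel₀ _ hw.ne']
      _ ≤ (v + b) / a := by
          gcongr
          exact max_le hwv (by linarith)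
  have decay_mul_add_le : min 1 (v / b) * (v + b) ≤ 2 * v := by
    have : min 1 (v / b) * b ≤ v := (le_div_iff₀ hb).1 (min_le_right _ _)
    nlinarith [min_le_left 1 (v / b)]
  rw [mul_min_of_nonneg 1 (v / ρ) zero_le_four, mul_right_comm]
  refine le_min ?_ ?_
  · calc _ ≤ (1 : ℝ) * 1 := by
          gcongr
          exact min_le_left _ _
      _ ≤ 4 * 1 := by norm_num
  · calc _ ≤ (v + b) / a * min 1 (v / b) := by gcongr
      _ = min 1 (v / b) * (v + b) / a := by ring
      _ ≤ 2 * v / (ρ / 2) := by gcongr; linarith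
      _ = 4 * (v / ρ) := by field_simp; norm_num

namespace IsBlowupProfile

variable {s p κ η K : ℝ} {Φ : ℝ → ℝ} {a b ρ u v w R t : ℝ}

lemma one_le_apply (h : IsBlowupProfile κ η K Φ) (ht : 0 < t) : 1 ≤ Φ t := by
  have hmin : min 1 t ∈ Ioc (0 : ℝ) 1 := ⟨by positivity, min_le_left _ _⟩
  calc 1 = Φ (min 1 t) := (h.eq_one _ hmin).symm
    _ ≤ Φ t := h.monotoneOn hmin.1 ht (min_le_right _ _)

lemma one_le_const (h : IsBlowupProfile κ η K Φ) : 1 ≤ K := by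
  simpa [h.eq_one 1 (by simp)] using h.apply_mul_le le_rfl one_pos

lemma apply_le (h : IsBlowupProfile κ η K Φ) (ht : 0 < t) : Φ t ≤ K * max 1 t ^ κ :=
  calc Φ t ≤ Φ (max 1 t * 1) := h.monotoneOn ht (by simp) (by simp)
    _ ≤ K * max 1 t ^ κ * Φ 1 := h.apply_mul_le (le_max_left _ _) one_pos
    _ = K * max 1 t ^ κ := by rw [h.eq_one 1 (by simp), mul_one]

lemma profileKernel_nonneg (h : IsBlowupProfile κ η K Φ) (hρ : 0 < ρ) (hu : 0 < u) (hv : 0 < v) :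
    0 ≤ profileKernel s p Φ ρ u v := by
  have := h.one_le_apply (div_pos hρ hu)
  unfold profileKernel
  positivity

lemma rpow_mul_apply_div_le (h : IsBlowupProfile κ η K Φ) (hsκ : s + κ ≤ 0) (hρ : 0 < ρ)
    (hu : 0 < u) (hρt : ρ ≤ t) : t ^ s * Φ (t / u) ≤ K * (ρ ^ s * Φ (ρ / u)) := by
  obtain ⟨q, rfl⟩ : ∃ q, t = q * ρ := ⟨t / ρ, by field_simp⟩
  have hq : 1 ≤ q := le_of_mul_le_mul_right (by linarith) hρ
  have hΦ := h.one_le_apply (div_pos hρ hu)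
  have hK := h.one_le_const
  calc (q * ρ) ^ s * Φ (q * ρ / u) ≤ q ^ s * ρ ^ s * (K * q ^ κ * Φ (ρ / u)) := by
        rw [Real.mul_rpow (by linarith) hρ.le, mul_div_assoc]
        gcongr
        exact h.apply_mul_le hq (by positivity)
    _ = q ^ (s + κ) * (K * (ρ ^ s * Φ (ρ / u))) := by
        rw [Real.rpow_add (by linarith)]
        ring
    _ ≤ K * (ρ ^ s * Φ (ρ / u)) :=
        mul_le_of_le_one_left (by positivity) (Real.rpow_le_one_of_one_le_of_nonpos hq hsκ)

lemma rpow_mul_apply_two_mul_div_le (h : IsBlowupProfile κ η K Φ) (hsκ : s + κ ≤ 0) (hρ : 0 < ρ)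
    (hu : 0 < u) (hρt : ρ ≤ 2 * t) :
    t ^ s * Φ (2 * t / u) ≤ 2 ^ (-s) * K * (ρ ^ s * Φ (ρ / u)) :=
  calc t ^ s * Φ (2 * t / u) = 2 ^ (-s) * ((2 * t) ^ s * Φ (2 * t / u)) := by
        rw [Real.mul_rpow zero_le_two (by linarith), Real.rpow_neg zero_le_two]
        field_simp
    _ ≤ 2 ^ (-s) * (K * (ρ ^ s * Φ (ρ / u))) := by
        gcongr 2 ^ (-s) * ?_
        exact h.rpow_mul_apply_div_le hsκ hρ hu hρt
    _ = 2 ^ (-s) * K * (ρ ^ s * Φ (ρ / u)) := by ring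

lemma min_rpow_mul_apply_div_le (h : IsBlowupProfile κ η K Φ) (hκp : κ ≤ p) (ha : 0 < a)
    (hb : 0 < b) (hw : 0 < w) : min 1 (w / a) ^ p * Φ (b / w) ≤ K * Φ (b / a) := by
  have hΦ := h.one_le_apply (div_pos hb ha)
  have hK := h.one_le_const
  have hmax : 1 ≤ max 1 (a / w) := le_max_left _ _
  have apply_le_max_rpow : Φ (b / w) ≤ K * max 1 (a / w) ^ p * Φ (b / a) :=
    calc Φ (b / w) ≤ Φ (max 1 (a / w) * (b / a)) := by
          refine h.monotoneOn (div_pos hb hw) (mem_Ioi.2 (by positivity)) ?_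
          calc b / w = a / w * (b / a) := by field_simp
            _ ≤ max 1 (a / w) * (b / a) := by
              gcongr
              exact le_max_right _ _
      _ ≤ K * max 1 (a / w) ^ κ * Φ (b / a) := h.apply_mul_le hmax (by positivity)
      _ ≤ K * max 1 (a / w) ^ p * Φ (b / a) := by gcongr
  calc min 1 (w / a) ^ p * Φ (b / w)
      ≤ min 1 (w / a) ^ p * (K * max 1 (a / w) ^ p * Φ (b / a)) := by gcongr
    _ = (min 1 (w / a) * max 1 (a / w)) ^ p * (K * Φ (b / a)) := by
        rw [Real.mul_rpow (by positivity) (by positivity)]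
        ring
    _ = K * Φ (b / a) := by
        rw [min_one_div_mul_max_one_div ha hw, Real.one_rpow, one_mul]

lemma apply_mul_min_rpow_mul_apply_le (h : IsBlowupProfile κ η K Φ) (hp : 0 ≤ p) (hκp : κ ≤ p)
    (hη : 0 ≤ η) (ha : 0 < a) (hu : 0 < u) (hw : 0 < w) (hab : a ≤ b) (huw : u ≤ w + a) :
    Φ (a / u) * (min 1 (w / a) ^ p * Φ (b / w)) ≤ K ^ 2 * (b / a) ^ η * Φ (2 * b / u) := by
  have hb : 0 < b := ha.trans_le hab
  have hK := h.one_le_const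
  have hba : 1 ≤ b / a := (one_le_div ha).2 hab
  have hΦbw := h.one_le_apply (div_pos hb hw)
  have hΦbu := h.one_le_apply (t := 2 * b / u) (by positivity)
  rcases le_total (2 * a) u with hau | hua
  · have apply_div_le : Φ (b / w) ≤ Φ (2 * b / u) := by
      refine h.monotoneOn (div_pos hb hw) (mem_Ioi.2 (by positivity)) ?_
      rw [div_le_div_iff₀ hw hu]
      nlinarith
    calc Φ (a / u) * (min 1 (w / a) ^ p * Φ (b / w)) ≤ 1 * (1 * Φ (2 * b / u)) := by
          rw [h.eq_one (a / u) ⟨by positivity, (div_le_one hu).2 (by linarith)⟩]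
          gcongr
          exact Real.rpow_le_one (by positivity) (min_le_left _ _) hp
      _ ≤ K ^ 2 * (b / a) ^ η * Φ (2 * b / u) := by
          rw [← mul_assoc]
          gcongr
          · exact one_le_pow₀ hK
          · exact Real.one_le_rpow hba hη
  · calc Φ (a / u) * (min 1 (w / a) ^ p * Φ (b / w)) ≤ Φ (2 * a / u) * (K * Φ (b / a)) := by
          gcongr ?_ * ?_
          · exact zero_le_one.trans (h.one_le_apply (by positivity))
          · exact h.monotoneOn (div_pos ha hu) (mem_Ioi.2 (by positivity))
              (by gcongr; linarith)
          · exact h.min_rpow_mul_apply_div_le hκp ha hb hw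
      _ = K * (Φ (b / a) * Φ (2 * a / u)) := by ring
      _ ≤ K * (K * (b / a) ^ η * Φ (b / a * (2 * a / u))) := by
          gcongr K * ?_
          exact h.mul_apply_le hba ((one_le_div hu).2 hua)
      _ = K ^ 2 * (b / a) ^ η * Φ (2 * b / u) := by
          rw [show b / a * (2 * a / u) = 2 * b / u by field_simp]
          ring

lemma min_rpow_mul_min_rpow_mul_apply_le (h : IsBlowupProfile κ η K Φ) (hp : 0 ≤ p) (hκp : κ ≤ p)
    (hb : 0 < b) (hρ : 0 < ρ) (hv : 0 < v) (hw : 0 < w) (hba : b ≤ a) (hρa : ρ ≤ 2 * a)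
    (hwv : w ≤ v + b) :
    min 1 (w / a) ^ p * min 1 (v / b) ^ p * Φ (b / w) ≤ K * 4 ^ p * min 1 (v / ρ) ^ p := by
  have ha : 0 < a := hb.trans_le hba
  have hK := h.one_le_const
  have hmax : 1 ≤ max 1 (b / w) := le_max_left _ _
  calc min 1 (w / a) ^ p * min 1 (v / b) ^ p * Φ (b / w)
      ≤ min 1 (w / a) ^ p * min 1 (v / b) ^ p * (K * max 1 (b / w) ^ p) := by
        gcongr
        exact (h.apply_le (div_pos hb hw)).trans (by gcongr)
    _ = K * (min 1 (w / a) * min 1 (v / b) * max 1 (b / w)) ^ p := by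
        rw [Real.mul_rpow (by positivity) (by positivity),
          Real.mul_rpow (by positivity) (by positivity)]
        ring
    _ ≤ K * (4 * min 1 (v / ρ)) ^ p := by
        gcongr K * ?_ ^ p
        exact min_mul_min_mul_max_le hb hρ hv hw hba hρa hwv
    _ = K * 4 ^ p * min 1 (v / ρ) ^ p := by
        rw [Real.mul_rpow zero_le_four (by positivity), mul_assoc]

lemma profileKernel_mul_le_of_right_le (h : IsBlowupProfile κ η K Φ) (hp : 0 ≤ p) (hκp : κ ≤ p)
    (hsκ : s + κ ≤ 0) (hb : 0 < b) (hρ : 0 < ρ) (hu : 0 < u) (hv : 0 < v) (hw : 0 < w)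
    (hba : b ≤ a) (hρab : ρ ≤ a + b) (hwv : w ≤ v + b) :
    profileKernel s p Φ a u w * profileKernel s p Φ b w v ≤
      2 ^ (-s) * 4 ^ p * K ^ 2 * b ^ s * profileKernel s p Φ ρ u v := by
  have ha : 0 < a := hb.trans_le hba
  have hK := h.one_le_const
  have hΦbw := h.one_le_apply (div_pos hb hw)
  have hΦρu := h.one_le_apply (div_pos hρ hu)
  have singularity_le : a ^ s * Φ (a / u) ≤ 2 ^ (-s) * K * (ρ ^ s * Φ (ρ / u)) :=
    calc a ^ s * Φ (a / u) ≤ a ^ s * Φ (2 * a / u) := by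
          gcongr
          exact h.monotoneOn (div_pos ha hu) (mem_Ioi.2 (by positivity)) (by gcongr; linarith)
      _ ≤ _ := h.rpow_mul_apply_two_mul_div_le hsκ hρ hu (by linarith)
  unfold profileKernel
  calc _ = a ^ s * Φ (a / u) * (min 1 (w / a) ^ p * min 1 (v / b) ^ p * Φ (b / w)) * b ^ s := by
        ring
    _ ≤ 2 ^ (-s) * K * (ρ ^ s * Φ (ρ / u)) * (K * 4 ^ p * min 1 (v / ρ) ^ p) * b ^ s := by
        gcongr ?_ * ?_ * _
        exact h.min_rpow_mul_min_rpow_mul_apply_le hp hκp hb hρ hv hw hba (by linarith) hwv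
    _ = _ := by ring

lemma profileKernel_mul_le_of_left_le (h : IsBlowupProfile κ η K Φ) (hp : 0 ≤ p) (hκp : κ ≤ p)
    (hη : 0 ≤ η) (hsκ : s + κ ≤ 0) (ha : 0 < a) (hρ : 0 < ρ) (hu : 0 < u) (hv : 0 < v) (hw : 0 < w)
    (hab : a ≤ b) (hρab : ρ ≤ a + b) (huw : u ≤ w + a) :
    profileKernel s p Φ a u w * profileKernel s p Φ b w v ≤
      2 ^ (-s) * 2 ^ p * K ^ 3 * (a ^ s * (b / a) ^ η) * profileKernel s p Φ ρ u v := by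
  have hb : 0 < b := ha.trans_le hab
  have hK := h.one_le_const
  have hΦbu := h.one_le_apply (t := 2 * b / u) (by positivity)
  have decay_le : min 1 (v / b) ^ p ≤ 2 ^ p * min 1 (v / ρ) ^ p := by
    rw [← Real.mul_rpow zero_le_two (by positivity)]
    gcongr
    exact min_one_div_le_two_mul hρ hv (by linarith)
  unfold profileKernel
  calc _ = a ^ s * (Φ (a / u) * (min 1 (w / a) ^ p * Φ (b / w))) * b ^ s * min 1 (v / b) ^ p := by
        ring
    _ ≤ a ^ s * (K ^ 2 * (b / a) ^ η * Φ (2 * b / u)) * b ^ s *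
          (2 ^ p * min 1 (v / ρ) ^ p) := by
        gcongr _ * ?_ * _ * ?_
        exact h.apply_mul_min_rpow_mul_apply_le hp hκp hη ha hu hw hab huw
    _ = 2 ^ p * K ^ 2 * (a ^ s * (b / a) ^ η) * min 1 (v / ρ) ^ p *
          (b ^ s * Φ (2 * b / u)) := by ring
    _ ≤ 2 ^ p * K ^ 2 * (a ^ s * (b / a) ^ η) * min 1 (v / ρ) ^ p *
          (2 ^ (-s) * K * (ρ ^ s * Φ (ρ / u))) := by
        gcongr _ * ?_
        exact h.rpow_mul_apply_two_mul_div_le hsκ hρ hu (by linarith)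
    _ = _ := by ring

lemma profileKernel_mul_le (h : IsBlowupProfile κ η K Φ) (hp : 0 ≤ p) (hκp : κ ≤ p) (hη : 0 ≤ η)
    (hsκ : s + κ ≤ 0) (ha : 0 < a) (hb : 0 < b) (hρ : 0 < ρ) (hu : 0 < u) (hv : 0 < v) (hw : 0 < w)
    (hρab : ρ ≤ a + b) (huw : u ≤ w + a) (hwv : w ≤ v + b) (haR : a ≤ R) (hbR : b ≤ R) :
    profileKernel s p Φ a u w * profileKernel s p Φ b w v ≤
      2 ^ (-s) * 4 ^ p * K ^ 3 * R ^ η * profileKernel s p Φ ρ u v *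
        (a ^ (s - η) + b ^ (s - η)) := by
  have hK := h.one_le_const
  have hk : 0 ≤ profileKernel s p Φ ρ u v := h.profileKernel_nonneg hρ hu hv
  have hR : 0 < R := ha.trans_le haR
  rcases le_total a b with hab | hba
  · have singularity_le : a ^ s * (b / a) ^ η ≤ R ^ η * (a ^ (s - η) + b ^ (s - η)) :=
      calc a ^ s * (b / a) ^ η ≤ a ^ s * (R / a) ^ η := by gcongr
        _ = R ^ η * a ^ (s - η) := by
            rw [Real.div_rpow hR.le ha.le, Real.rpow_sub ha]
            ring
        _ ≤ R ^ η * (a ^ (s - η) + b ^ (s - η)) := by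
            gcongr
            exact le_add_of_nonneg_right (by positivity)
    calc _ ≤ 2 ^ (-s) * 2 ^ p * K ^ 3 * (a ^ s * (b / a) ^ η) * profileKernel s p Φ ρ u v :=
          h.profileKernel_mul_le_of_left_le hp hκp hη hsκ ha hρ hu hv hw hab hρab huw
      _ ≤ 2 ^ (-s) * 4 ^ p * K ^ 3 * (R ^ η * (a ^ (s - η) + b ^ (s - η))) *
            profileKernel s p Φ ρ u v := by
          gcongr
          norm_num
      _ = _ := by ring
  · have singularity_le : b ^ s ≤ R ^ η * (a ^ (s - η) + b ^ (s - η)) :=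
      calc b ^ s = b ^ η * b ^ (s - η) := by rw [← Real.rpow_add hb, add_sub_cancel]
        _ ≤ R ^ η * (a ^ (s - η) + b ^ (s - η)) := by
            gcongr
            exact le_add_of_nonneg_left (by positivity)
    calc _ ≤ 2 ^ (-s) * 4 ^ p * K ^ 2 * b ^ s * profileKernel s p Φ ρ u v :=
          h.profileKernel_mul_le_of_right_le hp hκp hsκ hb hρ hu hv hw hba hρab hwv
      _ ≤ 2 ^ (-s) * 4 ^ p * K ^ 3 * (R ^ η * (a ^ (s - η) + b ^ (s - η))) *
            profileKernel s p Φ ρ u v := by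
          gcongr
          norm_num
      _ = _ := by ring

end IsBlowupProfile

section Riesz

open Module

variable {E : Type*} [NormedAddCommGroup E]

lemma preimage_sub_left_ball_zero (x : E) (R : ℝ) : (x - ·) ⁻¹' ball 0 R = ball x R := by
  ext z
  simp [dist_eq_norm_sub' z]

variable [NormedSpace ℝ E] [FiniteDimensional ℝ E] [MeasurableSpace E] [BorelSpace E]
  [Nontrivial E] (μ : Measure E) [μ.IsAddHaarMeasure] {e R : ℝ}

lemma setIntegral_ball_fun_norm {F : Type*} [NormedAddCommGroup F] [NormedSpace ℝ F]
    (f : ℝ → F) (R : ℝ) :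
    ∫ z in ball 0 R, f ‖z‖ ∂μ =
      finrank ℝ E • μ.real (ball 0 1) • ∫ t in Ioo 0 R, t ^ (finrank ℝ E - 1) • f t :=
  calc ∫ z in ball 0 R, f ‖z‖ ∂μ = ∫ z, (Iio R).indicator f ‖z‖ ∂μ := by
        rw [← integral_indicator measurableSet_ball]
        simp [indicator]
    _ = finrank ℝ E • μ.real (ball 0 1) •
          ∫ t in Ioi 0, (Iio R).indicator (fun t => t ^ (finrank ℝ E - 1) • f t) t := by
        rw [integral_fun_norm_addHaar]
        simp only [indicator_smul]
    _ = _ := by rw [setIntegral_indicator measurableSet_Iio, Ioi_inter_Iio]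

lemma integrableOn_ball_norm_sub_rpow (he : 0 < e) (x : E) (R : ℝ) :
    IntegrableOn (fun z => ‖x - z‖ ^ (e - finrank ℝ E)) (ball x R) μ := by
  rw [← preimage_sub_left_ball_zero]
  refine ((Measure.measurePreserving_sub_left μ x).integrableOn_comp_preimage
    (MeasurableEquiv.subLeft x).measurableEmbedding (f := fun z => ‖z‖ ^ (e - finrank ℝ E))).2 ?_
  refine integrableOn_ball_of_norm_le_rpow (C := 1) (α := finrank ℝ E - e) finrank_pos
    (by linarith) (ae_of_all _ fun z => ?_)
    (measurable_norm.pow_const _).aestronglyMeasurable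
  rw [Real.norm_of_nonneg (by positivity), neg_sub, one_mul]

lemma setIntegral_ball_norm_sub_rpow (he : 0 < e) (hR : 0 ≤ R) (x : E) :
    ∫ z in ball x R, ‖x - z‖ ^ (e - finrank ℝ E) ∂μ =
      finrank ℝ E * μ.real (ball 0 1) * (R ^ e / e) := by
  have rpow_mul_rpow {t : ℝ} (ht : t ∈ Ioo 0 R) :
      t ^ (finrank ℝ E - 1) • t ^ (e - finrank ℝ E) = t ^ (e - 1) := by
    rw [smul_eq_mul, ← Real.rpow_natCast, ← Real.rpow_add ht.1, Nat.cast_pred finrank_pos]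
    ring_nf
  calc ∫ z in ball x R, ‖x - z‖ ^ (e - finrank ℝ E) ∂μ
      = ∫ z in ball 0 R, ‖z‖ ^ (e - finrank ℝ E) ∂μ := by
        rw [← preimage_sub_left_ball_zero]
        exact (Measure.measurePreserving_sub_left μ x).setIntegral_preimage_emb
          (MeasurableEquiv.subLeft x).measurableEmbedding (fun z => ‖z‖ ^ (e - finrank ℝ E)) _
    _ = finrank ℝ E * μ.real (ball 0 1) * ∫ t in 0..R, t ^ (e - 1) := by
        rw [setIntegral_ball_fun_norm μ (· ^ (e - finrank ℝ E)),
          setIntegral_congr_fun measurableSet_Ioo fun _ => rpow_mul_rpow,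
          intervalIntegral.integral_of_le hR, integral_Ioc_eq_integral_Ioo, nsmul_eq_mul,
          smul_eq_mul, mul_assoc]
    _ = finrank ℝ E * μ.real (ball 0 1) * (R ^ e / e) := by
        rw [integral_rpow (.inl (by linarith)), sub_add_cancel, Real.zero_rpow he.ne', sub_zero]

lemma setIntegral_norm_sub_rpow_le {x : E} {D : Set E} (he : 0 < e) (hR : 0 ≤ R)
    (hD : D ⊆ ball x R) :
    ∫ z in D, ‖x - z‖ ^ (e - finrank ℝ E) ∂μ ≤
      finrank ℝ E * μ.real (ball 0 1) * (R ^ e / e) :=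
  calc ∫ z in D, ‖x - z‖ ^ (e - finrank ℝ E) ∂μ
      ≤ ∫ z in ball x R, ‖x - z‖ ^ (e - finrank ℝ E) ∂μ :=
        setIntegral_mono_set (integrableOn_ball_norm_sub_rpow μ he x R)
          (ae_of_all _ fun _ => by positivity) (ae_of_all _ hD)
    _ = finrank ℝ E * μ.real (ball 0 1) * (R ^ e / e) :=
        setIntegral_ball_norm_sub_rpow μ he hR x

lemma setIntegral_le_of_le_mul_add_norm_sub_rpow {x y : E} {D : Set E} {H : E → ℝ} {C : ℝ}
    (he : 0 < e) (hR : 0 ≤ R) (hC : 0 ≤ C) (hxR : D ⊆ ball x R) (hyR : D ⊆ ball y R)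
    (hH : AEStronglyMeasurable H (μ.restrict D)) (hH₀ : ∀ᵐ z ∂μ.restrict D, 0 ≤ H z)
    (hHC : ∀ᵐ z ∂μ.restrict D,
      H z ≤ C * (‖x - z‖ ^ (e - finrank ℝ E) + ‖y - z‖ ^ (e - finrank ℝ E))) :
    IntegrableOn H D μ ∧
      ∫ z in D, H z ∂μ ≤ C * (2 * (finrank ℝ E * μ.real (ball 0 1) * (R ^ e / e))) := by
  set G : E → E → ℝ := fun a z => ‖a - z‖ ^ (e - finrank ℝ E)
  have hG {a : E} (ha : D ⊆ ball a R) : IntegrableOn (G a) D μ :=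
    (integrableOn_ball_norm_sub_rpow μ he a R).mono_set ha
  have hCG : IntegrableOn (fun z => C * (G x z + G y z)) D μ :=
    ((hG hxR).add (hG hyR)).const_mul C
  have hH_int : IntegrableOn H D μ := hCG.mono' hH <| by
    filter_upwards [hH₀, hHC] with z hz₀ hzC
    rwa [Real.norm_of_nonneg hz₀]
  refine ⟨hH_int, ?_⟩
  calc ∫ z in D, H z ∂μ ≤ ∫ z in D, C * (G x z + G y z) ∂μ := integral_mono_ae hH_int hCG hHC
    _ = C * (∫ z in D, G x z ∂μ + ∫ z in D, G y z ∂μ) := by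
        rw [integral_const_mul, integral_add (hG hxR) (hG hyR)]
    _ ≤ C * (2 * (finrank ℝ E * μ.real (ball 0 1) * (R ^ e / e))) := by
        rw [two_mul]
        gcongr
        · exact setIntegral_norm_sub_rpow_le μ he hR hxR
        · exact setIntegral_norm_sub_rpow_le μ he hR hyR

end Riesz

section Domain

open Module

variable {E : Type*} [NormedAddCommGroup E] {s p κ η K R γ : ℝ} {Φ : ℝ → ℝ} {δ : E → ℝ}
  {D : Set E} {x y z : E}

/-- `profileKernel` as a function of two points, for a given distance-to-the-boundary function
`δ`; the kernel `h_D` is the case `δ = δ_D`. -/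
def profileKernelAt (s p : ℝ) (Φ : ℝ → ℝ) (δ : E → ℝ) (x y : E) : ℝ :=
  profileKernel s p Φ ‖x - y‖ (δ x) (δ y)

namespace IsBlowupProfile

lemma profileKernelAt_nonneg (h : IsBlowupProfile κ η K Φ) (hδx : 0 < δ x) (hδy : 0 < δ y)
    (hxy : x ≠ y) : 0 ≤ profileKernelAt s p Φ δ x y :=
  h.profileKernel_nonneg (norm_sub_pos_iff.2 hxy) hδx hδy

lemma profileKernelAt_mul_le (h : IsBlowupProfile κ η K Φ) (hp : 0 ≤ p) (hκp : κ ≤ p) (hη : 0 ≤ η)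
    (hsκ : s + κ ≤ 0) (hδ : LipschitzWith 1 δ) (hδx : 0 < δ x) (hδy : 0 < δ y) (hδz : 0 < δ z)
    (hxy : x ≠ y) (hzx : z ≠ x) (hzy : z ≠ y) (hzxR : z ∈ ball x R) (hzyR : z ∈ ball y R) :
    profileKernelAt s p Φ δ x z * profileKernelAt s p Φ δ z y ≤
      2 ^ (-s) * 4 ^ p * K ^ 3 * R ^ η * profileKernelAt s p Φ δ x y *
        (‖x - z‖ ^ (s - η) + ‖y - z‖ ^ (s - η)) := by
  have hδ_le (a b : E) : δ a ≤ δ b + ‖a - b‖ := by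
    simpa [dist_eq_norm] using hδ.le_add_mul a b
  rw [norm_sub_rev y z]
  exact h.profileKernel_mul_le hp hκp hη hsκ (norm_sub_pos_iff.2 hzx.symm)
    (norm_sub_pos_iff.2 hzy) (norm_sub_pos_iff.2 hxy) hδx hδy hδz
    (norm_sub_le_norm_sub_add_norm_sub x z y) (hδ_le x z) (hδ_le z y)
    (mem_ball_iff_norm'.1 hzxR).le (mem_ball_iff_norm.1 hzyR).le

variable [NormedSpace ℝ E] [FiniteDimensional ℝ E] [MeasurableSpace E] [BorelSpace E]

lemma setIntegral_profileKernelAt_mul_le [Nontrivial E] (h : IsBlowupProfile κ η K Φ)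
    (hΦ : Measurable Φ) (hp : 0 ≤ p) (hκp : κ ≤ p) (hη : 0 ≤ η) (hηγ : η < γ)
    (hγκ : γ + κ ≤ finrank ℝ E) (hs : s = γ - finrank ℝ E) (hδ : LipschitzWith 1 δ)
    (hD : MeasurableSet D) (hδD : ∀ z ∈ D, 0 < δ z) (hxR : D ⊆ ball x R) (hyR : D ⊆ ball y R)
    (hx : x ∈ D) (hy : y ∈ D) (hxy : x ≠ y) (μ : Measure E) [μ.IsAddHaarMeasure] :
    IntegrableOn (fun z => profileKernelAt s p Φ δ x z * profileKernelAt s p Φ δ z y) D μ ∧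
      ∫ z in D, profileKernelAt s p Φ δ x z * profileKernelAt s p Φ δ z y ∂μ ≤
        2 ^ (-s) * 4 ^ p * K ^ 3 * (2 * finrank ℝ E * μ.real (ball 0 1) / (γ - η)) * R ^ γ *
          profileKernelAt s p Φ δ x y := by
  have hR : 0 < R := pos_of_mem_ball (hxR hx)
  have hK := h.one_le_const
  have hk := h.profileKernelAt_nonneg (s := s) (p := p) (hδD x hx) (hδD y hy) hxy
  have hmeas : Measurable fun z => profileKernelAt s p Φ δ x z * profileKernelAt s p Φ δ z y := by
    have hδ_meas : Measurable δ := hδ.continuous.measurable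
    refine Measurable.mul ?_ ?_ <;>
      exact measurable_profileKernel hΦ (by fun_prop) (by fun_prop) (by fun_prop)
  have hne : ∀ᵐ z ∂μ.restrict D, z ∈ D ∧ z ≠ x ∧ z ≠ y := by
    filter_upwards [ae_restrict_mem hD, Measure.ae_ne _ x, Measure.ae_ne _ y] with z hz hzx hzy
    exact ⟨hz, hzx, hzy⟩
  obtain ⟨hint, hle⟩ := setIntegral_le_of_le_mul_add_norm_sub_rpow μ (sub_pos.2 hηγ) hR.le
    (C := 2 ^ (-s) * 4 ^ p * K ^ 3 * R ^ η * profileKernelAt s p Φ δ x y) (by positivity) hxR hyR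
    hmeas.aestronglyMeasurable
    (hne.mono fun z ⟨hz, hzx, hzy⟩ => mul_nonneg
      (h.profileKernelAt_nonneg (hδD x hx) (hδD z hz) hzx.symm)
      (h.profileKernelAt_nonneg (hδD z hz) (hδD y hy) hzy))
    (hne.mono fun z ⟨hz, hzx, hzy⟩ => by
      rw [sub_right_comm, ← hs]
      exact h.profileKernelAt_mul_le hp hκp hη (by linarith) hδ (hδD x hx) (hδD y hy) (hδD z hz)
        hxy hzx hzy (hxR hz) (hyR hz))
  refine ⟨hint, hle.trans_eq ?_⟩
  rw [Real.rpow_sub hR]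
  field_simp

end IsBlowupProfile

end Domain

section BoundaryDistance

variable {d : ℕ} {D : Set (EuclideanSpace ℝ (Fin d))}

lemma hKer_eq_profileKernelAt (α β : ℝ) (D : Set (EuclideanSpace ℝ (Fin d))) :
    hKer α β D = profileKernelAt (α - β - d) (α / 2) (blowupProfile α β) (deltaD D) := by
  ext x y
  unfold hKer profileKernelAt profileKernel blowupProfile
  split_ifs with _ h
  · rw [mul_one]
  · rw [h, show 2 * β - β = β by ring, show 2 * β / 2 = β by ring]
  · rfl

lemma lipschitzWith_deltaD (D : Set (EuclideanSpace ℝ (Fin d))) : LipschitzWith 1 (deltaD D) :=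
  lipschitz_infDist_pt _

lemma deltaD_pos {x : EuclideanSpace ℝ (Fin d)} (hD : IsOpen D) (hne : D ≠ univ) (hx : x ∈ D) :
    0 < deltaD D x := by
  have hfr : (frontier D).Nonempty := nonempty_frontier_iff.2 ⟨⟨x, hx⟩, hne⟩
  refine (isClosed_frontier.notMem_iff_infDist_pos hfr).1 fun hxfr => ?_
  exact (hD.inter_frontier_eq ▸ ⟨hx, hxfr⟩ : x ∈ (∅ : Set _))

end BoundaryDistance

theorem integral_h_h_bound_general (d : ℕ) (α β : ℝ) (hβ : 0 < β) (hβα : β < α) (hαd : α < 2 * d)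
    (hαβd : α - β ≤ d) :
    ∃ c > 0, ∀ D : Set (EuclideanSpace ℝ (Fin d)), IsOpen D → ∀ x₀ r, D ⊆ ball x₀ r →
      ∀ x ∈ D, ∀ y ∈ D, x ≠ y →
        IntegrableOn (fun z => hKer α β D x z * hKer α β D z y) D ∧
          ∫ z in D, hKer α β D x z * hKer α β D z y ≤ c * r ^ (α - β) * hKer α β D x y := by
  obtain ⟨κ, η, K, hκ, hκd, hη, hηγ, hprofile⟩ :=
    exists_isBlowupProfile_blowupProfile hβ hβα hαd hαβd
  have hd : (0 : ℝ) < d := by linarith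
  have hK := hprofile.one_le_const
  have hV : 0 < volume.real (ball (0 : EuclideanSpace ℝ (Fin d)) 1) :=
    ENNReal.toReal_pos (measure_ball_pos _ _ one_pos).ne' measure_ball_lt_top.ne
  have : 0 < α - β - η := sub_pos.2 hηγ
  refine ⟨2 ^ (-(α - β - d)) * 4 ^ (α / 2) * K ^ 3 *
    (2 * d * volume.real (ball (0 : EuclideanSpace ℝ (Fin d)) 1) / (α - β - η)) * 2 ^ (α - β),
    by positivity, fun D hD x₀ r hDr x hx y hy hxy => ?_⟩
  have : Nontrivial (EuclideanSpace ℝ (Fin d)) := ⟨x, y, hxy⟩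
  have hr : 0 < r := pos_of_mem_ball (hDr hx)
  have hD_univ : D ≠ univ := fun h =>
    NormedSpace.unbounded_univ ℝ (EuclideanSpace ℝ (Fin d)) (isBounded_ball.subset (h ▸ hDr))
  have hD_ball {a} (ha : a ∈ D) : D ⊆ ball a (2 * r) := fun z hz => by
    have := dist_triangle_right z a x₀
    rw [mem_ball]
    linarith [mem_ball.1 (hDr hz), mem_ball.1 (hDr ha)]
  have hbound := hprofile.setIntegral_profileKernelAt_mul_le (p := α / 2) (s := α - β - d)
    (measurable_blowupProfile α β) (by linarith) hκ hη hηγ (by simpa using hκd) (by simp)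
    (lipschitzWith_deltaD D) hD.measurableSet (fun z => deltaD_pos hD hD_univ) (hD_ball hx)
    (hD_ball hy) hx hy hxy volume
  rw [hKer_eq_profileKernelAt]
  simpa [Real.mul_rpow zero_le_two hr.le, mul_assoc] using hbound

/-- `∫_B h_B(x,z) h_B(z,y) dz ≤ c r^{α-β} h_B(x,y)` on balls. -/
theorem integral_h_h_bound (d : ℕ) (hd : 2 ≤ d) (α β : ℝ)
    (hβ : 0 < β) (hβα : β < α) (hα : α < 2) :
    ∃ c > 0, ∀ (x₀ : EuclideanSpace ℝ (Fin d)) (r : ℝ), 0 < r →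
      ∀ x ∈ Metric.ball x₀ r, ∀ y ∈ Metric.ball x₀ r, x ≠ y →
        (∫ z in Metric.ball x₀ r,
            hKer α β (Metric.ball x₀ r) x z * hKer α β (Metric.ball x₀ r) z y)
          ≤ c * r ^ (α - β) * hKer α β (Metric.ball x₀ r) x y := by
  have hd' : (2 : ℝ) ≤ d := by exact_mod_cast hd
  obtain ⟨c, hc, hbound⟩ :=
    integral_h_h_bound_general d α β hβ hβα (by linarith) (by linarith)
  exact ⟨c, hc, fun x₀ r _ x hx y hy hxy =>
    (hbound _ isOpen_ball x₀ r Subset.rfl x hx y hy hxy).2⟩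
end
end

section
/- Let d ≥ 1, β > 0 and γ ∈ (0, d). Then there exists a constant C = C(d, β, γ) > 0 such that for all distinct x, y ∈ ℝ^d: ∫_{{u ∈ ℝ^d : |u−x| ≥ (3/4)|x−y|}} |u−y|^{γ−d}·|u−x|^{−d−β} du ≤ C·|x−y|^{γ−d−β}. -/
open MeasureTheory Metric Set

noncomputable section

/-!
With `r = ‖x - y‖`, split the domain `a * r ≤ ‖u - x‖` along the sphere of radius `r` around `y`.
Inside it, `‖u - x‖` is comparable to `r`, so only the integrable singularity at `y` matters.
Outside it, `‖u - y‖` is comparable to `‖u - x‖`, so the integrand is dominated by a multiple of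
`‖u - x‖ ^ (γ - 2 * d - β)`, which is integrable at infinity when `γ < d + β`. In polar coordinates
both contributions are multiples of `r ^ (γ - d - β)`.
-/

lemma rpow_le_max_rpow_mul_rpow {m M s t : ℝ} (hm : 0 < m) (hs : 0 < s) (hmt : m * s ≤ t)
    (htM : t ≤ M * s) (q : ℝ) : t ^ q ≤ max (m ^ q) (M ^ q) * s ^ q := by
  have ht : 0 < t := (mul_pos hm hs).trans_le hmt
  have hM : 0 < M := pos_of_mul_pos_left (ht.trans_le htM) hs.le
  rcases le_total 0 q with hq | hq
  · calc t ^ q ≤ (M * s) ^ q := Real.rpow_le_rpow ht.le htM hq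
      _ = M ^ q * s ^ q := Real.mul_rpow hM.le hs.le
      _ ≤ max (m ^ q) (M ^ q) * s ^ q := by gcongr; exact le_max_right _ _
  · calc t ^ q ≤ (m * s) ^ q := Real.rpow_le_rpow_of_nonpos (mul_pos hm hs) hmt hq
      _ = m ^ q * s ^ q := Real.mul_rpow hm.le hs.le
      _ ≤ max (m ^ q) (M ^ q) * s ^ q := by gcongr; exact le_max_left _ _

lemma integrableOn_and_setIntegral_le_add_of_dominated {X : Type*} [MeasurableSpace X]
    {μ : Measure X} {f g₁ g₂ : X → ℝ} {s t₁ t₂ : Set X} (hs : MeasurableSet s)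
    (ht₁ : MeasurableSet t₁) (ht₂ : MeasurableSet t₂)
    (hf : AEStronglyMeasurable f (μ.restrict s)) (hg₁ : IntegrableOn g₁ t₁ μ)
    (hg₂ : IntegrableOn g₂ t₂ μ) (hf_nonneg : 0 ≤ f) (hg₁_nonneg : 0 ≤ g₁) (hg₂_nonneg : 0 ≤ g₂)
    (hfg : ∀ u ∈ s, u ∈ t₁ ∧ f u ≤ g₁ u ∨ u ∈ t₂ ∧ f u ≤ g₂ u) :
    IntegrableOn f s μ ∧ ∫ u in s, f u ∂μ ≤ ∫ u in t₁, g₁ u ∂μ + ∫ u in t₂, g₂ u ∂μ := by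
  have h₁ := hg₁.integrable_indicator ht₁
  have h₂ := hg₂.integrable_indicator ht₂
  have h₁_nonneg : 0 ≤ t₁.indicator g₁ := indicator_nonneg fun u _ => hg₁_nonneg u
  have h₂_nonneg : 0 ≤ t₂.indicator g₂ := indicator_nonneg fun u _ => hg₂_nonneg u
  have hle : ∀ u ∈ s, f u ≤ (t₁.indicator g₁ + t₂.indicator g₂) u := by
    intro u hu
    rcases hfg u hu with ⟨hut, hle⟩ | ⟨hut, hle⟩
    · exact le_add_of_le_of_nonneg (by rwa [indicator_of_mem hut]) (h₂_nonneg u)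
    · exact le_add_of_nonneg_of_le (h₁_nonneg u) (by rwa [indicator_of_mem hut])
  have hf_int : IntegrableOn f s μ := by
    refine (h₁.add h₂).integrableOn.mono' hf (ae_restrict_of_forall_mem hs fun u hu => ?_)
    simpa only [Real.norm_of_nonneg (hf_nonneg u)] using hle u hu
  refine ⟨hf_int, ?_⟩
  calc ∫ u in s, f u ∂μ
      ≤ ∫ u in s, (t₁.indicator g₁ + t₂.indicator g₂) u ∂μ :=
        setIntegral_mono_on hf_int (h₁.add h₂).integrableOn hs hle
    _ ≤ ∫ u, (t₁.indicator g₁ + t₂.indicator g₂) u ∂μ :=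
        setIntegral_le_integral (h₁.add h₂) (ae_of_all _ (add_nonneg h₁_nonneg h₂_nonneg))
    _ = ∫ u in t₁, g₁ u ∂μ + ∫ u in t₂, g₂ u ∂μ := by
        rw [integral_add' h₁ h₂, integral_indicator ht₁, integral_indicator ht₂]

section Kernel

variable {E : Type*} [SeminormedAddCommGroup E] {a : ℝ} {u x y : E}

lemma norm_sub_rpow_le_of_near (ha : 0 < a) (hxy : 0 < ‖x - y‖) (hx : a * ‖x - y‖ ≤ ‖u - x‖)
    (hy : ‖u - y‖ ≤ ‖x - y‖) (q : ℝ) :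
    ‖u - x‖ ^ q ≤ max (a ^ q) (2 ^ q) * ‖x - y‖ ^ q := by
  refine rpow_le_max_rpow_mul_rpow ha hxy hx ?_ q
  linarith [norm_sub_le_norm_sub_add_norm_sub u y x, norm_sub_rev x y]

lemma norm_sub_rpow_le_of_far (ha : 0 < a) (hxy : 0 < ‖x - y‖) (hx : a * ‖x - y‖ ≤ ‖u - x‖)
    (hy : ‖x - y‖ ≤ ‖u - y‖) (p : ℝ) :
    ‖u - y‖ ^ p ≤ max (2⁻¹ ^ p) ((1 + a⁻¹) ^ p) * ‖u - x‖ ^ p := by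
  refine rpow_le_max_rpow_mul_rpow (by norm_num) ((mul_pos ha hxy).trans_le hx) ?_ ?_ p
  · linarith [norm_sub_le_norm_sub_add_norm_sub u y x, norm_sub_rev x y]
  · calc ‖u - y‖ ≤ ‖u - x‖ + ‖x - y‖ := norm_sub_le_norm_sub_add_norm_sub u x y
      _ ≤ ‖u - x‖ + a⁻¹ * ‖u - x‖ := by gcongr; exact (le_inv_mul_iff₀ ha).2 hx
      _ = (1 + a⁻¹) * ‖u - x‖ := by ring

lemma norm_sub_rpow_mul_le_near_or_far (ha : 0 < a) (hxy : 0 < ‖x - y‖)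
    (hx : a * ‖x - y‖ ≤ ‖u - x‖) (p q : ℝ) :
    ‖u - y‖ < ‖x - y‖ ∧
        ‖u - y‖ ^ p * ‖u - x‖ ^ q ≤ max (a ^ q) (2 ^ q) * ‖x - y‖ ^ q * ‖u - y‖ ^ p ∨
      ‖u - y‖ ^ p * ‖u - x‖ ^ q ≤
        max (2⁻¹ ^ p) ((1 + a⁻¹) ^ p) * ‖u - x‖ ^ (p + q) := by
  rcases lt_or_ge ‖u - y‖ ‖x - y‖ with hy | hy
  · refine Or.inl ⟨hy, ?_⟩
    rw [mul_comm (‖u - y‖ ^ p)]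
    gcongr
    exact norm_sub_rpow_le_of_near ha hxy hx hy.le q
  · refine Or.inr ?_
    rw [Real.rpow_add ((mul_pos ha hxy).trans_le hx), ← mul_assoc]
    gcongr
    exact norm_sub_rpow_le_of_far ha hxy hx hy p

end Kernel

section Radial

open Module Measure

variable {E : Type*} [NormedAddCommGroup E] [NormedSpace ℝ E] [FiniteDimensional ℝ E]
  [Nontrivial E]

lemma pow_finrank_sub_one_smul_rpow {t : ℝ} (ht : 0 < t) (p : ℝ) :
    t ^ (finrank ℝ E - 1) • t ^ p = t ^ (p + finrank ℝ E - 1) := by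
  rw [smul_eq_mul, ← Real.rpow_natCast, ← Real.rpow_add ht, Nat.cast_pred finrank_pos]
  ring_nf

variable [MeasurableSpace E] [BorelSpace E] (μ : Measure E) [μ.IsAddHaarMeasure]

lemma toSphere_real_univ_pos : 0 < μ.toSphere.real univ := by
  have : NeZero μ.toSphere := ⟨toSphere_ne_zero μ⟩
  exact measureReal_univ_pos

variable {F : Type*} [NormedAddCommGroup F] [NormedSpace ℝ F]

lemma integrableOn_fun_norm_sub_iff {T : Set ℝ} (hT : MeasurableSet T) (f : ℝ → F) (y : E) :
    IntegrableOn (fun u => f ‖u - y‖) {u | ‖u - y‖ ∈ T} μ ↔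
      IntegrableOn (fun t => t ^ (finrank ℝ E - 1) • f t) (T ∩ Ioi 0) := by
  have hS : MeasurableSet {u : E | ‖u‖ ∈ T} := hT.preimage measurable_norm
  have htranslate : IntegrableOn (fun u => f ‖u - y‖) {u | ‖u - y‖ ∈ T} μ ↔
      IntegrableOn (fun u => f ‖u‖) {u | ‖u‖ ∈ T} μ :=
    (measurePreserving_sub_right μ y).integrableOn_comp_preimage (measurableEmbedding_subRight y)
      (f := fun u => f ‖u‖) (s := {u | ‖u‖ ∈ T})
  rw [htranslate, ← integrable_indicator_iff hS, ← integrableOn_indicator_iff hT, indicator_smul]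
  exact integrable_fun_norm_addHaar μ (f := T.indicator f)

lemma setIntegral_fun_norm_sub {T : Set ℝ} (hT : MeasurableSet T) (f : ℝ → F) (y : E) :
    ∫ u in {u | ‖u - y‖ ∈ T}, f ‖u - y‖ ∂μ =
      μ.toSphere.real univ • ∫ t in T ∩ Ioi 0, t ^ (finrank ℝ E - 1) • f t := by
  have hS : MeasurableSet {u : E | ‖u - y‖ ∈ T} := hT.preimage (by fun_prop)
  calc ∫ u in {u | ‖u - y‖ ∈ T}, f ‖u - y‖ ∂μ
      = ∫ u, T.indicator f ‖u - y‖ ∂μ := (integral_indicator hS).symm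
    _ = ∫ u, T.indicator f ‖u‖ ∂μ := integral_sub_right_eq_self (fun u => T.indicator f ‖u‖) y
    _ = μ.toSphere.real univ •
          ∫ t in Ioi 0, T.indicator (fun t => t ^ (finrank ℝ E - 1) • f t) t := by
        rw [integral_fun_norm_addHaar, toSphere_real_apply_univ, mul_smul, Nat.cast_smul_eq_nsmul,
          indicator_smul]
    _ = μ.toSphere.real univ • ∫ t in T ∩ Ioi 0, t ^ (finrank ℝ E - 1) • f t := by
        rw [setIntegral_indicator hT, inter_comm]

lemma integrableOn_norm_sub_rpow_iff {T : Set ℝ} (hT : MeasurableSet T) (p : ℝ) (y : E) :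
    IntegrableOn (fun u => ‖u - y‖ ^ p) {u | ‖u - y‖ ∈ T} μ ↔
      IntegrableOn (fun t : ℝ => t ^ (p + finrank ℝ E - 1)) (T ∩ Ioi 0) :=
  (integrableOn_fun_norm_sub_iff μ hT (· ^ p) y).trans <|
    integrableOn_congr_fun (fun _ ht => pow_finrank_sub_one_smul_rpow ht.2 p)
      (hT.inter measurableSet_Ioi)

lemma setIntegral_norm_sub_rpow {T : Set ℝ} (hT : MeasurableSet T) (p : ℝ) (y : E) :
    ∫ u in {u | ‖u - y‖ ∈ T}, ‖u - y‖ ^ p ∂μ =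
      μ.toSphere.real univ * ∫ t in T ∩ Ioi 0, t ^ (p + finrank ℝ E - 1) := by
  rw [setIntegral_fun_norm_sub μ hT (· ^ p) y, smul_eq_mul,
    setIntegral_congr_fun (hT.inter measurableSet_Ioi)
      fun _ ht => pow_finrank_sub_one_smul_rpow ht.2 p]

variable {p r : ℝ}

lemma integrableOn_norm_sub_rpow_of_norm_lt (hp : 0 < p + finrank ℝ E) (hr : 0 < r) (y : E) :
    IntegrableOn (fun u => ‖u - y‖ ^ p) {u | ‖u - y‖ < r} μ := by
  refine (integrableOn_norm_sub_rpow_iff μ measurableSet_Iio p y).2 ?_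
  rw [Iio_inter_Ioi, intervalIntegral.integrableOn_Ioo_rpow_iff hr]
  linarith

lemma setIntegral_norm_sub_rpow_of_norm_lt (hp : 0 < p + finrank ℝ E) (hr : 0 ≤ r) (y : E) :
    ∫ u in {u | ‖u - y‖ < r}, ‖u - y‖ ^ p ∂μ =
      μ.toSphere.real univ * (r ^ (p + finrank ℝ E) / (p + finrank ℝ E)) := by
  have hradial : ∫ t in Iio r ∩ Ioi 0, t ^ (p + finrank ℝ E - 1) =
      r ^ (p + finrank ℝ E) / (p + finrank ℝ E) := by
    rw [Iio_inter_Ioi, ← integral_Ioc_eq_integral_Ioo, ← intervalIntegral.integral_of_le hr,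
      integral_rpow (Or.inl (by linarith)), sub_add_cancel, Real.zero_rpow hp.ne', sub_zero]
  rw [← hradial]
  exact setIntegral_norm_sub_rpow μ measurableSet_Iio p y

lemma integrableOn_norm_sub_rpow_of_le_norm (hp : p + finrank ℝ E < 0) (hr : 0 < r) (x : E) :
    IntegrableOn (fun u => ‖u - x‖ ^ p) {u | r ≤ ‖u - x‖} μ := by
  refine (integrableOn_norm_sub_rpow_iff μ measurableSet_Ici p x).2 ?_
  rw [inter_eq_left.2 (Ici_subset_Ioi.2 hr), integrableOn_Ici_iff_integrableOn_Ioi,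
    integrableOn_Ioi_rpow_iff hr]
  linarith

lemma setIntegral_norm_sub_rpow_of_le_norm (hp : p + finrank ℝ E < 0) (hr : 0 < r) (x : E) :
    ∫ u in {u | r ≤ ‖u - x‖}, ‖u - x‖ ^ p ∂μ =
      μ.toSphere.real univ * (r ^ (p + finrank ℝ E) / -(p + finrank ℝ E)) := by
  have hradial : ∫ t in Ici r ∩ Ioi 0, t ^ (p + finrank ℝ E - 1) =
      r ^ (p + finrank ℝ E) / -(p + finrank ℝ E) := by
    rw [inter_eq_left.2 (Ici_subset_Ioi.2 hr), integral_Ici_eq_integral_Ioi,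
      integral_Ioi_rpow_of_lt (by linarith) hr, sub_add_cancel, neg_div, div_neg]
  rw [← hradial]
  exact setIntegral_norm_sub_rpow μ measurableSet_Ici p x

lemma integrableOn_and_setIntegral_norm_sub_rpow_mul_le {a q : ℝ} {x y : E} (ha : 0 < a)
    (hp : 0 < p + finrank ℝ E) (hpq : p + q + finrank ℝ E < 0) (hxy : x ≠ y) :
    IntegrableOn (fun u => ‖u - y‖ ^ p * ‖u - x‖ ^ q) {u | a * ‖x - y‖ ≤ ‖u - x‖} μ ∧
      ∫ u in {u | a * ‖x - y‖ ≤ ‖u - x‖}, ‖u - y‖ ^ p * ‖u - x‖ ^ q ∂μ ≤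
        μ.toSphere.real univ * (max (a ^ q) (2 ^ q) / (p + finrank ℝ E) +
          max (2⁻¹ ^ p) ((1 + a⁻¹) ^ p) *
            (a ^ (p + q + finrank ℝ E) / -(p + q + finrank ℝ E))) *
        ‖x - y‖ ^ (p + q + finrank ℝ E) := by
  have hr : 0 < ‖x - y‖ := norm_sub_pos_iff.2 hxy
  have hR : 0 < a * ‖x - y‖ := mul_pos ha hr
  have hnear := (integrableOn_norm_sub_rpow_of_norm_lt μ hp hr y).const_mul
    (max (a ^ q) (2 ^ q) * ‖x - y‖ ^ q)
  have hfar := (integrableOn_norm_sub_rpow_of_le_norm μ hpq hR x).const_mul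
    (max (2⁻¹ ^ p) ((1 + a⁻¹) ^ p))
  obtain ⟨hint, hle⟩ := integrableOn_and_setIntegral_le_add_of_dominated
    (measurableSet_le measurable_const (by fun_prop))
    (measurableSet_lt (by fun_prop) measurable_const)
    (measurableSet_le measurable_const (by fun_prop))
    (Measurable.aestronglyMeasurable (by fun_prop)) hnear hfar
    (fun _ => by positivity) (fun _ => by positivity) (fun _ => by positivity)
    fun _ hu => (norm_sub_rpow_mul_le_near_or_far ha hr hu p q).imp_right (⟨hu, ·⟩)
  have hscale : ‖x - y‖ ^ (p + q + finrank ℝ E) =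
      ‖x - y‖ ^ q * ‖x - y‖ ^ (p + finrank ℝ E) := by
    rw [← Real.rpow_add hr]
    ring_nf
  refine ⟨hint, hle.trans_eq ?_⟩
  rw [integral_const_mul, integral_const_mul, setIntegral_norm_sub_rpow_of_norm_lt μ hp hr.le,
    setIntegral_norm_sub_rpow_of_le_norm μ hpq hR, Real.mul_rpow ha.le hr.le, hscale]
  ring

theorem riesz_convolution_bound_general {a β γ : ℝ} (ha : 0 < a) (hγ : 0 < γ)
    (hγβ : γ < finrank ℝ E + β) :
    ∃ C > 0, ∀ x y : E, x ≠ y →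
      IntegrableOn (fun u => ‖u - y‖ ^ (γ - finrank ℝ E) * ‖u - x‖ ^ (-finrank ℝ E - β))
        {u | a * ‖x - y‖ ≤ ‖u - x‖} μ ∧
      ∫ u in {u | a * ‖x - y‖ ≤ ‖u - x‖},
          ‖u - y‖ ^ (γ - finrank ℝ E) * ‖u - x‖ ^ (-finrank ℝ E - β) ∂μ
        ≤ C * ‖x - y‖ ^ (γ - finrank ℝ E - β) := by
  have hexp : γ - finrank ℝ E + (-finrank ℝ E - β) + finrank ℝ E = γ - finrank ℝ E - β := by ring
  have hnear : 0 < γ - finrank ℝ E + finrank ℝ E := by rwa [sub_add_cancel]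
  have hfar : γ - finrank ℝ E + (-finrank ℝ E - β) + finrank ℝ E < 0 := by linarith
  refine ⟨_, ?_, fun x y hxy => hexp ▸
    integrableOn_and_setIntegral_norm_sub_rpow_mul_le μ ha hnear hfar hxy⟩
  have hfar_neg := neg_pos.2 hfar
  have hsphere := toSphere_real_univ_pos μ
  rw [← hexp]
  positivity

end Radial

/-- a Riesz-convolution-type integral bound. -/
theorem riesz_convolution_bound (d : ℕ) (hd : 1 ≤ d) (β γ : ℝ)
    (hβ : 0 < β) (hγ0 : 0 < γ) (hγd : γ < d) :
    ∃ C > 0, ∀ x y : EuclideanSpace ℝ (Fin d), x ≠ y →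
      (∫ u in {u : EuclideanSpace ℝ (Fin d) | 3 / 4 * ‖x - y‖ ≤ ‖u - x‖},
          ‖u - y‖ ^ (γ - (d : ℝ)) * ‖u - x‖ ^ (-(d : ℝ) - β))
        ≤ C * ‖x - y‖ ^ (γ - (d : ℝ) - β) := by
  have : Nonempty (Fin d) := ⟨⟨0, hd⟩⟩
  obtain ⟨C, hC, h⟩ := riesz_convolution_bound_general (E := EuclideanSpace ℝ (Fin d)) volume
    (a := 3 / 4) (β := β) (by norm_num) hγ0 (by rw [finrank_euclideanSpace_fin]; linarith)
  rw [finrank_euclideanSpace_fin] at h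
  exact ⟨C, hC, fun x y hxy => (h x y hxy).2⟩
end
end
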